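/- arXiv:1908.01943 — 2 statements merged into one kernel-verified Lean document; each statement's English description precedes it below -/
import Mathlib

section
/- Let X and Y be random vectors in ℝⁿ that are elliptically distributed with the same location μ ∈ ℝⁿ and the same characteristic generator φ, with dispersion matrices Σ_x and Σ_y respectively, and let A = I_n − (1/n)·1_{n×n} be the n×n centering matrix. If A Σ_x Aᵀ ⪯ A Σ_y Aᵀ, then G_n(AX − Aμ) ≤_st G_n(AY − Aμ). In particular, if μ = c·1_n for some c ∈ ℝ (including μ = 0), then G_n(X) ≤_st G_n(Y). -/
open MeasureTheory ProbabilityTheory Matrix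

/-- Gini index of `x ∈ ℝⁿ`: `G_n(x) = (1/n²) ∑_i ∑_j |x_i − x_j|`. -/
noncomputable def gini {n : ℕ} (x : Fin n → ℝ) : ℝ :=
  (1 / (n : ℝ) ^ 2) * ∑ i, ∑ j, |x i - x j|

/-- Characteristic function of a random vector `X : Ω → ℝⁿ` at `t ∈ ℝⁿ`:
`E[exp(i⟨t,X⟩)]`. -/
noncomputable def charFn {Ω : Type*} [MeasurableSpace Ω] {n : ℕ}
    (P : Measure Ω) (X : Ω → (Fin n → ℝ)) (t : Fin n → ℝ) : ℂ :=
  ∫ ω, Complex.exp (((∑ i, t i * X ω i : ℝ) : ℂ) * Complex.I) ∂P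

/-- The centering matrix `A = Iₙ − (1/n)·1_{n×n}`. -/
noncomputable def centeringMatrix (n : ℕ) : Matrix (Fin n) (Fin n) ℝ :=
  1 - ((n : ℝ)⁻¹) • Matrix.of (fun _ _ => (1 : ℝ))

open scoped ENNReal

lemma bm1_compact {K L S : Set ℝ} (hK : IsCompact K) (hL : IsCompact L) (hKn : K.Nonempty)
    (hLn : L.Nonempty) (hS : ∀ a ∈ K, ∀ b ∈ L, (a + b) / 2 ∈ S) :
    volume K + volume L ≤ 2 * volume S := by
  obtain ⟨a, haK, ha⟩ := hK.exists_isGreatest hKn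
  obtain ⟨b, hbL, hb⟩ := hL.exists_isLeast hLn
  set T : Set ℝ := (fun x => (1/2 : ℝ) * x) ⁻¹' S with hT
  have hTv : volume T = 2 * volume S := by
    rw [hT, Real.volume_preimage_mul_left (by norm_num)]
    norm_num
  rw [← hTv]
  have h1 : volume ((fun x => x - b) ⁻¹' K) = volume K := by
    simp [sub_eq_add_neg]
  have h2 : volume ((fun x => x - a) ⁻¹' L) = volume L := by
    simp [sub_eq_add_neg]
  have hLm : MeasurableSet ((fun x => x - a) ⁻¹' L) := hL.measurableSet.preimage (by fun_prop)
  rw [← h1, ← h2, ← measure_union₀ hLm.nullMeasurableSet]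
  · apply measure_mono
    rintro x (hx | hx)
    · have := hS _ hx b hbL
      simp only [hT, Set.mem_preimage]
      convert this using 1; ring
    · have := hS a haK _ hx
      simp only [hT, Set.mem_preimage]
      convert this using 1; ring
  · refine measure_mono_null (t := {a + b}) ?_ (by simp)
    rintro x ⟨hx, hy⟩
    have h3 := ha hx
    have h4 := hb hy
    simp only [Set.mem_singleton_iff]
    linarith

lemma bm1 {A B S : Set ℝ} (hA : MeasurableSet A) (hB : MeasurableSet B) (hAn : A.Nonempty)
    (hBn : B.Nonempty) (hS : ∀ a ∈ A, ∀ b ∈ B, (a + b) / 2 ∈ S) :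
    volume A + volume B ≤ 2 * volume S := by
  obtain ⟨a0, ha0⟩ := hAn
  obtain ⟨b0, hb0⟩ := hBn
  have hne : ∀ T : Set ℝ, Nonempty {K : Set ℝ // K ⊆ T ∧ IsCompact K} := fun T =>
    ⟨⟨∅, by simp, isCompact_empty⟩⟩
  have key : ∀ K L : Set ℝ, K ⊆ A → IsCompact K → L ⊆ B → IsCompact L →
      volume K + volume L ≤ 2 * volume S := by
    intro K L hKA hK hLB hL
    calc volume K + volume L ≤ volume (insert a0 K) + volume (insert b0 L) := by
          gcongr <;> exact Set.subset_insert _ _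
      _ ≤ _ := bm1_compact (hK.insert a0) (hL.insert b0) (Set.insert_nonempty _ _)
          (Set.insert_nonempty _ _) (fun a ha b hb => hS a (Set.insert_subset ha0 hKA ha) b
            (Set.insert_subset hb0 hLB hb))
  have hsup : ∀ T : Set ℝ, MeasurableSet T →
      volume T = ⨆ K : {K : Set ℝ // K ⊆ T ∧ IsCompact K}, volume K.1 := by
    intro T hT
    rw [hT.measure_eq_iSup_isCompact, iSup_subtype]
    simp only [iSup_and]
  have := hne A
  have := hne B
  rw [hsup A hA, hsup B hB, ENNReal.iSup_add]
  refine iSup_le fun K => ?_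
  rw [ENNReal.add_iSup]
  exact iSup_le fun L => key K.1 L.1 K.2.1 K.2.2 L.2.1 L.2.2

/-- normalized one-dimensional Prekopa-Leindler -/
lemma pl1_norm {f g h : ℝ → ℝ} (hf : Measurable f) (hg : Measurable g) (hh : Measurable h)
    (hf0 : ∀ x, 0 ≤ f x) (hg0 : ∀ x, 0 ≤ g x) (hh0 : ∀ x, 0 ≤ h x)
    (hf1 : ∀ x, f x ≤ 1) (hg1 : ∀ x, g x ≤ 1)
    (hfs : ∀ t < 1, ∃ x, t < f x) (hgs : ∀ t < 1, ∃ x, t < g x)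
    (H : ∀ x y, f x * g y ≤ h ((x + y) / 2) ^ 2) :
    (∫⁻ x, ENNReal.ofReal (f x)) + ∫⁻ x, ENNReal.ofReal (g x)
      ≤ 2 * ∫⁻ x, ENNReal.ofReal (h x) := by
  rw [lintegral_eq_lintegral_meas_lt _ (ae_of_all _ hf0) hf.aemeasurable,
    lintegral_eq_lintegral_meas_lt _ (ae_of_all _ hg0) hg.aemeasurable,
    lintegral_eq_lintegral_meas_lt _ (ae_of_all _ hh0) hh.aemeasurable,
    ← lintegral_const_mul' _ _ (by simp)]
  have hanti : Measurable fun t : ℝ => volume {a | t < f a} :=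
    Antitone.measurable fun s t hst => measure_mono fun a (ha : t < f a) => lt_of_le_of_lt hst ha
  rw [← lintegral_add_left hanti]
  refine setLIntegral_mono' measurableSet_Ioi fun t ht => ?_
  have ht0 : (0:ℝ) < t := ht
  by_cases ht1 : t < 1
  · refine bm1 (measurableSet_lt measurable_const hf) (measurableSet_lt measurable_const hg)
      (hfs t ht1) (hgs t ht1) ?_
    intro a ha b hb
    simp only [Set.mem_ofPred_eq] at ha hb ⊢
    have h1 := H a b
    by_contra hcon
    push Not at hcon
    have := hh0 ((a + b) / 2)
    nlinarith
  · push Not at ht1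
    have e1 : {a | t < f a} = ∅ := by
      ext a; simp only [Set.mem_ofPred_eq, Set.mem_empty_iff_false, iff_false, not_lt]
      exact (hf1 a).trans ht1
    have e2 : {a | t < g a} = ∅ := by
      ext a; simp only [Set.mem_ofPred_eq, Set.mem_empty_iff_false, iff_false, not_lt]
      exact (hg1 a).trans ht1
    simp [e1, e2]

/-- one-dimensional PL, bounded case -/
lemma pl1_bdd {f g h : ℝ → ℝ≥0∞} (hf : Measurable f) (hg : Measurable g) (hh : Measurable h)
    (M : ℝ≥0∞) (hM : M ≠ ∞) (hfM : ∀ x, f x ≤ M) (hgM : ∀ x, g x ≤ M)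
    (H : ∀ x y, f x * g y ≤ h ((x + y) / 2) ^ 2) :
    (∫⁻ x, f x) * (∫⁻ x, g x) ≤ (∫⁻ x, h x) ^ 2 := by
  set α := ⨆ x, f x with hα
  set β := ⨆ x, g x with hβ
  have hαt : α ≠ ∞ := ne_top_of_le_ne_top hM (iSup_le hfM)
  have hβt : β ≠ ∞ := ne_top_of_le_ne_top hM (iSup_le hgM)
  by_cases hα0 : α = 0
  · have : ∀ x, f x = 0 := by simpa [hα] using hα0
    simp [this]
  by_cases hβ0 : β = 0
  · have : ∀ x, g x = 0 := by simpa [hβ] using hβ0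
    simp [this]
  have hfα : ∀ x, f x ≤ α := le_iSup f
  have hgβ : ∀ x, g x ≤ β := le_iSup g
  set a := α.toReal with ha
  set b := β.toReal with hb
  have ha0 : 0 < a := ENNReal.toReal_pos hα0 hαt
  have hb0 : 0 < b := ENNReal.toReal_pos hβ0 hβt
  set c := Real.sqrt (a * b) with hc
  have hc0 : 0 < c := Real.sqrt_pos.2 (mul_pos ha0 hb0)
  have hc2 : c ^ 2 = a * b := Real.sq_sqrt (mul_pos ha0 hb0).le
  set h' : ℝ → ℝ≥0∞ := fun x => min (h x) (ENNReal.ofReal c) with hh'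
  have hh'm : Measurable h' := hh.min measurable_const
  have hft : ∀ x, f x ≠ ∞ := fun x => ne_top_of_le_ne_top hαt (hfα x)
  have hgt : ∀ x, g x ≠ ∞ := fun x => ne_top_of_le_ne_top hβt (hgβ x)
  have hht : ∀ x, h' x ≠ ∞ := fun x => ne_top_of_le_ne_top ENNReal.ofReal_ne_top (min_le_right _ _)
  have hab : ENNReal.ofReal c ^ 2 = α * β := by
    rw [← ENNReal.ofReal_pow hc0.le, hc2, ENNReal.ofReal_mul ha0.le, ENNReal.ofReal_toReal hαt,
      ENNReal.ofReal_toReal hβt]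
  have H' : ∀ x y, f x * g y ≤ h' ((x + y) / 2) ^ 2 := by
    intro x y
    simp only [hh']
    rcases le_total (h ((x + y) / 2)) (ENNReal.ofReal c) with h1 | h1
    · rw [min_eq_left h1]; exact H x y
    · rw [min_eq_right h1, hab]; exact mul_le_mul' (hfα x) (hgβ y)
  have key := pl1_norm (f := fun x => (f x).toReal / a) (g := fun x => (g x).toReal / b)
    (h := fun x => (h' x).toReal / c) (hf.ennreal_toReal.div_const _)
    (hg.ennreal_toReal.div_const _) (hh'm.ennreal_toReal.div_const _)
    (fun x => by positivity) (fun x => by positivity) (fun x => by positivity)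
    (fun x => by
      rw [div_le_one ha0]; exact ENNReal.toReal_mono hαt (hfα x))
    (fun x => by
      rw [div_le_one hb0]; exact ENNReal.toReal_mono hβt (hgβ x))
    (fun t ht => by
      rcases lt_or_ge t 0 with h0 | h0
      · exact ⟨0, lt_of_lt_of_le h0 (by positivity)⟩
      have : ENNReal.ofReal (t * a) < α := by
        rw [ENNReal.ofReal_lt_iff_lt_toReal (by positivity) hαt]
        nlinarith
      obtain ⟨x, hx⟩ := lt_iSup_iff.1 this
      refine ⟨x, ?_⟩
      rw [lt_div_iff₀ ha0]
      rwa [ENNReal.ofReal_lt_iff_lt_toReal (by positivity) (hft x)] at hx)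
    (fun t ht => by
      rcases lt_or_ge t 0 with h0 | h0
      · exact ⟨0, lt_of_lt_of_le h0 (by positivity)⟩
      have : ENNReal.ofReal (t * b) < β := by
        rw [ENNReal.ofReal_lt_iff_lt_toReal (by positivity) hβt]
        nlinarith
      obtain ⟨x, hx⟩ := lt_iSup_iff.1 this
      refine ⟨x, ?_⟩
      rw [lt_div_iff₀ hb0]
      rwa [ENNReal.ofReal_lt_iff_lt_toReal (by positivity) (hgt x)] at hx)
    (fun x y => by
      have := ENNReal.toReal_mono (ENNReal.pow_ne_top (hht _)) (H' x y)
      rw [ENNReal.toReal_mul, ENNReal.toReal_pow] at this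
      rw [div_mul_div_comm, div_pow, hc2]
      gcongr)
  have conv : ∀ (u : ℝ → ℝ≥0∞) (r : ℝ), (∀ x, u x ≠ ∞) → 0 < r →
      ∫⁻ x, ENNReal.ofReal ((u x).toReal / r) = (∫⁻ x, u x) * ENNReal.ofReal r⁻¹ := by
    intro u r hu hr
    rw [← lintegral_mul_const' _ _ ENNReal.ofReal_ne_top]
    congr 1; ext x
    rw [div_eq_mul_inv, ENNReal.ofReal_mul ENNReal.toReal_nonneg, ENNReal.ofReal_toReal (hu x)]
  rw [conv f a hft ha0, conv g b hgt hb0, conv h' c hht hc0] at key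
  have hle : ∫⁻ x, h' x ≤ ∫⁻ x, h x := lintegral_mono fun x => min_le_left _ _
  refine le_trans ?_ (pow_le_pow_left' hle 2)
  by_cases hI : ∫⁻ x, h' x = ∞
  · simp [hI]
  have hFt : ∫⁻ x, f x ≠ ∞ := by
    intro hF
    rw [hF, ENNReal.top_mul (by simp [ha0]), top_add, top_le_iff] at key
    exact ENNReal.mul_ne_top (by simp) (ENNReal.mul_ne_top hI (by simp)) key
  have hGt : ∫⁻ x, g x ≠ ∞ := by
    intro hF
    rw [hF, ENNReal.top_mul (by simp [hb0]), add_top, top_le_iff] at key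
    exact ENNReal.mul_ne_top (by simp) (ENNReal.mul_ne_top hI (by simp)) key
  generalize (∫⁻ x, f x) = F at *
  generalize (∫⁻ x, g x) = G at *
  generalize (∫⁻ x, h' x) = I at *
  lift F to NNReal using hFt
  lift G to NNReal using hGt
  lift I to NNReal using hI
  have k2 := ENNReal.toReal_mono (by finiteness) key
  rw [ENNReal.toReal_add (by finiteness) (by finiteness)] at k2
  simp only [ENNReal.toReal_mul, ENNReal.coe_toReal, ENNReal.toReal_ofReal (inv_nonneg.2 ha0.le),
    ENNReal.toReal_ofReal (inv_nonneg.2 hb0.le), ENNReal.toReal_ofReal (inv_nonneg.2 hc0.le),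
    ENNReal.toReal_ofNat] at k2
  have k3 : (F : ℝ) * G ≤ I ^ 2 := by
    have e : (F * a⁻¹ : ℝ) * (G * b⁻¹) ≤ (I * c⁻¹) ^ 2 := by
      have p1 : 0 ≤ (F * a⁻¹ : ℝ) := by positivity
      have p2 : 0 ≤ (G * b⁻¹ : ℝ) := by positivity
      have p3 : 0 ≤ (I * c⁻¹ : ℝ) := by positivity
      nlinarith [sq_nonneg ((F * a⁻¹ : ℝ) - G * b⁻¹)]
    have e2 : (F * a⁻¹ : ℝ) * (G * b⁻¹) = F * G / c ^ 2 := by rw [hc2]; field_simp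
    have e3 : (I * c⁻¹ : ℝ) ^ 2 = I ^ 2 / c ^ 2 := by field_simp
    rw [e2, e3] at e
    exact (div_le_div_iff_of_pos_right (by positivity)).1 e
  exact_mod_cast k3

lemma pl1 {f g h : ℝ → ℝ≥0∞} (hf : Measurable f) (hg : Measurable g) (hh : Measurable h)
    (H : ∀ x y, f x * g y ≤ h ((x + y) / 2) ^ 2) :
    (∫⁻ x, f x) * (∫⁻ x, g x) ≤ (∫⁻ x, h x) ^ 2 := by
  have hs : ∀ u : ℝ → ℝ≥0∞, Measurable u → ∫⁻ x, u x = ⨆ N : ℕ, ∫⁻ x, min (u x) N := by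
    intro u hu
    rw [← lintegral_iSup (fun N => hu.min measurable_const)]
    · congr 1; ext x
      rw [← inf_iSup_eq, ENNReal.iSup_natCast]
      simp
    · intro m n hmn x
      exact min_le_min le_rfl (by exact_mod_cast hmn)
  rw [hs f hf, hs g hg, ENNReal.iSup_mul]
  refine iSup_le fun N => ?_
  rw [ENNReal.mul_iSup]
  refine iSup_le fun M => ?_
  refine pl1_bdd (hf.min measurable_const) (hg.min measurable_const) hh (max N M) (by simp)
    (fun x => (min_le_right _ _).trans (le_max_left _ _))
    (fun x => (min_le_right _ _).trans (le_max_right _ _)) (fun x y => ?_)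
  exact (mul_le_mul' (min_le_left _ _) (min_le_left _ _)).trans (H x y)

lemma pln (n : ℕ) : ∀ {f g h : (Fin n → ℝ) → ℝ≥0∞}, Measurable f → Measurable g → Measurable h →
    (∀ x y, f x * g y ≤ h ((2⁻¹ : ℝ) • (x + y)) ^ 2) →
    (∫⁻ x, f x) * (∫⁻ x, g x) ≤ (∫⁻ x, h x) ^ 2 := by
  induction n with
  | zero =>
    intro f g h hf hg hh H
    rw [volume_pi, Measure.pi_of_empty _ (0 : Fin 0 → ℝ)]
    simp only [lintegral_dirac]
    simpa using H 0 0
  | succ n ih =>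
    intro f g h hf hg hh H
    have e := (volume_preserving_piFinSuccAbove (fun _ : Fin (n + 1) => ℝ) 0).symm
    have he : ∀ p : ℝ × (Fin n → ℝ), (MeasurableEquiv.piFinSuccAbove (fun _ : Fin (n + 1) => ℝ) 0).symm p
        = (Fin.cons p.1 p.2 : Fin (n + 1) → ℝ) := by
      intro p
      simp [MeasurableEquiv.piFinSuccAbove_symm_apply, Fin.insertNthEquiv]
    have conv : ∀ u : (Fin (n + 1) → ℝ) → ℝ≥0∞, Measurable u →
        ∫⁻ x, u x = ∫⁻ s : ℝ, ∫⁻ x : Fin n → ℝ, u (Fin.cons s x : Fin (n + 1) → ℝ) := by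
      intro u hu
      rw [← e.lintegral_comp hu, Measure.volume_eq_prod, lintegral_prod]
      · simp only [he]
      · exact (hu.comp e.measurable).aemeasurable
    have hm : ∀ u : (Fin (n + 1) → ℝ) → ℝ≥0∞, Measurable u →
        Measurable fun p : ℝ × (Fin n → ℝ) => u (Fin.cons p.1 p.2 : Fin (n + 1) → ℝ) := by
      intro u hu
      have := hu.comp e.measurable
      simpa only [Function.comp_def, he] using this
    rw [conv f hf, conv g hg, conv h hh]
    refine pl1 (hm f hf).lintegral_prod_right' (hm g hg).lintegral_prod_right'
      (hm h hh).lintegral_prod_right' fun s t => ?_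
    refine ih ((hm f hf).comp measurable_prodMk_left) ((hm g hg).comp measurable_prodMk_left)
      ((hm h hh).comp measurable_prodMk_left) fun x y => ?_
    convert H (Fin.cons s x) (Fin.cons t y) using 3
    ext i
    refine Fin.cases ?_ (fun j => ?_) i
    · simp; ring
    · simp; ring

lemma anderson {n : ℕ} {B C : Set (Fin n → ℝ)} (hBm : MeasurableSet B) (hCm : MeasurableSet C)
    (hB : Convex ℝ B) (hC : Convex ℝ C) (hBs : ∀ x ∈ B, -x ∈ B) (hCs : ∀ x ∈ C, -x ∈ C)
    (v : Fin n → ℝ) :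
    volume {z | z ∈ B ∧ z + v ∈ C} ≤ volume {z | z ∈ B ∧ z ∈ C} := by
  classical
  set F : Set (Fin n → ℝ) := {z | z ∈ B ∧ z + v ∈ C} with hF
  set I : Set (Fin n → ℝ) := {z | z ∈ B ∧ z ∈ C} with hI
  have hFm : MeasurableSet F := hBm.inter (hCm.preimage (measurable_add_const v))
  have hIm : MeasurableSet I := hBm.inter hCm
  have hnm : MeasurableSet (-F) := hFm.neg
  have := pln n (f := F.indicator 1) (g := (-F).indicator 1) (h := I.indicator 1)
    (measurable_one.indicator hFm) (measurable_one.indicator hnm) (measurable_one.indicator hIm)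
    (fun x y => by
      by_cases hx : x ∈ F
      · by_cases hy : y ∈ -F
        · have : (2⁻¹ : ℝ) • (x + y) ∈ I := by
            have hx1 := hx.1
            have hx2 := hx.2
            have hy1 := hBs _ hy.1
            have hy2 := hCs _ hy.2
            constructor
            · have := hB hx1 hy1 (show (0:ℝ) ≤ 2⁻¹ by norm_num) (show (0:ℝ) ≤ 2⁻¹ by norm_num)
                (by norm_num)
              convert this using 1; simp
            · have := hC hx2 hy2 (show (0:ℝ) ≤ 2⁻¹ by norm_num) (show (0:ℝ) ≤ 2⁻¹ by norm_num)
                (by norm_num)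
              convert this using 1
              ext i; simp; ring
          rw [Set.indicator_of_mem hx, Set.indicator_of_mem hy, Set.indicator_of_mem this]
          simp
        · simp [Set.indicator_of_notMem hy]
      · simp [hx])
  rw [lintegral_indicator_one hFm, lintegral_indicator_one hnm, lintegral_indicator_one hIm,
    Measure.measure_neg, ← sq] at this
  exact (ENNReal.pow_right_strictMono two_ne_zero).le_iff_le.1 this

/-- squared Euclidean norm -/
noncomputable def qq {n : ℕ} (x : Fin n → ℝ) : ℝ := ∑ i, x i ^ 2

lemma qq_nonneg {n : ℕ} (x : Fin n → ℝ) : 0 ≤ qq x := Finset.sum_nonneg fun i _ => sq_nonneg _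

lemma qq_cont {n : ℕ} : Continuous (qq (n := n)) := by unfold qq; fun_prop

lemma qq_neg {n : ℕ} (x : Fin n → ℝ) : qq (-x) = qq x := by simp [qq]

lemma qq_convex {n : ℕ} (x y : Fin n → ℝ) {a b : ℝ} (ha : 0 ≤ a) (hb : 0 ≤ b) (hab : a + b = 1) :
    qq (a • x + b • y) ≤ a * qq x + b * qq y := by
  unfold qq
  rw [Finset.mul_sum, Finset.mul_sum, ← Finset.sum_add_distrib]
  refine Finset.sum_le_sum fun i _ => ?_
  simp only [Pi.add_apply, Pi.smul_apply, smul_eq_mul]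
  have hb' : b = 1 - a := by linarith
  subst hb'
  nlinarith [mul_nonneg (mul_nonneg ha hb) (sq_nonneg (x i - y i))]

lemma hasDerivAt_setIntegral {n : ℕ} {C : Set (Fin n → ℝ)} (hC : IsCompact C)
    {F F' : ℝ → (Fin n → ℝ) → ℝ} (hF : Continuous (Function.uncurry F))
    (hF' : Continuous (Function.uncurry F'))
    (h : ∀ s y, HasDerivAt (fun s => F s y) (F' s y) s) (s : ℝ) :
    HasDerivAt (fun s => ∫ y in C, F s y) (∫ y in C, F' s y) s := by
  have hcomp : IsCompact (Set.Icc (s - 1) (s + 1) ×ˢ C) := isCompact_Icc.prod hC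
  obtain ⟨M, hM⟩ := hcomp.exists_bound_of_continuousOn hF'.continuousOn
  have hcont : ∀ t, Continuous (F t) := fun t => hF.comp (Continuous.prodMk_right t)
  have hcont' : ∀ t, Continuous (F' t) := fun t => hF'.comp (Continuous.prodMk_right t)
  haveI : IsFiniteMeasure (volume.restrict C) := ⟨by
    rw [Measure.restrict_apply_univ]; exact hC.measure_lt_top⟩
  refine (hasDerivAt_integral_of_dominated_loc_of_deriv_le (μ := volume.restrict C)
    (s := Set.Icc (s - 1) (s + 1)) (bound := fun _ => M)
    (Icc_mem_nhds (by linarith) (by linarith)) ?_ ?_ ?_ ?_ ?_ ?_).2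
  · exact Filter.Eventually.of_forall fun t => (hcont t).aestronglyMeasurable
  · exact (hcont s).continuousOn.integrableOn_compact hC
  · exact (hcont' s).aestronglyMeasurable
  · refine (ae_restrict_mem hC.measurableSet).mono fun y hy t ht => ?_
    exact hM (t, y) ⟨ht, hy⟩
  · exact integrable_const _
  · exact ae_of_all _ fun y t _ => h t y

lemma int_min {n : ℕ} {C : Set (Fin n → ℝ)} (hC : IsCompact C) (hCc : Convex ℝ C)
    (hCs : ∀ x ∈ C, -x ∈ C) {K : ℝ → ℝ} (hK : Continuous K) (hK0 : ∀ s, 0 ≤ K s)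
    {Q : (Fin n → ℝ) → ℝ} (hQ : Continuous Q) (hQ0 : ∀ x, 0 ≤ Q x) (hQs : ∀ x, Q (-x) = Q x)
    (hQc : ∀ x y (a b : ℝ), 0 ≤ a → 0 ≤ b → a + b = 1 → Q (a • x + b • y) ≤ a * Q x + b * Q y)
    (v : Fin n → ℝ) :
    ∫ z in C, (∫ s in (0:ℝ)..Q z, K s) ≤ ∫ z in C, (∫ s in (0:ℝ)..Q (z + v), K s) := by
  obtain ⟨M1, hM1⟩ := hC.exists_bound_of_continuousOn hQ.continuousOn
  obtain ⟨M2, hM2⟩ := hC.exists_bound_of_continuousOn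
    (hQ.comp (continuous_add_const v)).continuousOn
  set M := max M1 M2 with hM
  have hb1 : ∀ z ∈ C, Q z ≤ M := fun z hz =>
    (le_abs_self _).trans ((hM1 z hz).trans (le_max_left _ _))
  have hb2 : ∀ z ∈ C, Q (z + v) ≤ M := fun z hz =>
    (le_abs_self _).trans ((hM2 z hz).trans (le_max_right _ _))
  have hii : ∀ a b, IntervalIntegrable K volume a b := fun a b => hK.intervalIntegrable a b
  have hac : Continuous fun t => ∫ s in (0:ℝ)..t, K s :=
    continuous_iff_continuousAt.2 fun t =>
      (intervalIntegral.integral_hasDerivAt_right (hii 0 t)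
        hK.stronglyMeasurable.stronglyMeasurableAtFilter hK.continuousAt).continuousAt
  set χ : ℝ → ℝ := fun t => (∫ s in (0:ℝ)..M, K s) - ∫ s in (0:ℝ)..t, K s with hχ
  have hχc : Continuous χ := continuous_const.sub hac
  have hχe : ∀ t, χ t = ∫ s in t..M, K s := fun t =>
    intervalIntegral.integral_interval_sub_left (hii _ _) (hii _ _)
  -- layer representation
  have hlayer : ∀ t, 0 ≤ t → t ≤ M → ENNReal.ofReal (χ t) =
      ∫⁻ s in Set.Ioi (0:ℝ), (Set.Ioc t M).indicator (fun s => ENNReal.ofReal (K s)) s := by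
    intro t ht0 htM
    rw [hχe, intervalIntegral.integral_of_le htM, ofReal_integral_eq_lintegral_ofReal
      (hii t M).1 (ae_of_all _ hK0), setLIntegral_indicator measurableSet_Ioc]
    congr 2
    ext s; simp only [Set.mem_Ioc, Set.mem_inter_iff, Set.mem_Ioi]
    constructor
    · intro h; exact ⟨h, lt_of_le_of_lt ht0 h.1⟩
    · intro h; exact h.1
  have hswap : ∀ P : (Fin n → ℝ) → ℝ, Continuous P → (∀ z, 0 ≤ P z) → (∀ z ∈ C, P z ≤ M) →
      ∫⁻ z in C, ENNReal.ofReal (χ (P z)) =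
        ∫⁻ s in Set.Ioi (0:ℝ), (Set.Iic M).indicator (fun s => ENNReal.ofReal (K s)) s
          * volume {z | z ∈ C ∧ P z < s} := by
    intro P hP hP0 hPM
    rw [setLIntegral_congr_fun hC.measurableSet
      (fun z hz => hlayer (P z) (hP0 z) (hPM z hz)), lintegral_lintegral_swap]
    · refine lintegral_congr fun s => ?_
      have : ∀ z, (Set.Ioc (P z) M).indicator (fun s => ENNReal.ofReal (K s)) s =
        (Set.Iic M).indicator (fun s => ENNReal.ofReal (K s)) s * {z | P z < s}.indicator 1 z := by
        intro z
        by_cases h1 : P z < s <;> by_cases h2 : s ≤ M <;> simp [h1, h2]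
      simp only [this]
      have hm : MeasurableSet {z | P z < s} := measurableSet_lt hP.measurable measurable_const
      rw [lintegral_const_mul _ (measurable_one.indicator hm), lintegral_indicator_one hm,
        Measure.restrict_apply hm]
      congr 2
      ext z; simp [and_comm]
    · have hm : MeasurableSet {p : (Fin n → ℝ) × ℝ | P p.1 < p.2 ∧ p.2 ≤ M} :=
        (measurableSet_lt (hP.measurable.comp measurable_fst) measurable_snd).inter
          (measurableSet_le measurable_snd measurable_const)
      have : (Function.uncurry fun z s => (Set.Ioc (P z) M).indicator (fun s => ENNReal.ofReal (K s)) s)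
          = {p : (Fin n → ℝ) × ℝ | P p.1 < p.2 ∧ p.2 ≤ M}.indicator
            (fun p => ENNReal.ofReal (K p.2)) := by
        ext ⟨z, s⟩
        simp [Function.uncurry, Set.indicator]
      rw [this]
      exact ((hK.measurable.comp measurable_snd).ennreal_ofReal.indicator hm).aemeasurable
  have hQv : Continuous fun z => Q (z + v) := hQ.comp (continuous_add_const v)
  have main : ∫⁻ z in C, ENNReal.ofReal (χ (Q (z + v))) ≤ ∫⁻ z in C, ENNReal.ofReal (χ (Q z)) := by
    rw [hswap (fun z => Q (z + v)) hQv (fun z => hQ0 _) hb2, hswap Q hQ hQ0 hb1]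
    refine lintegral_mono fun s => ?_
    dsimp only
    refine mul_le_mul' le_rfl ?_
    refine anderson (C := {z | Q z < s}) hC.measurableSet
      (measurableSet_lt hQ.measurable measurable_const) hCc ?_ hCs ?_ v
    · intro x hx y hy a b ha hb hab
      simp only [Set.mem_ofPred_eq] at hx hy ⊢
      refine lt_of_le_of_lt (hQc x y a b ha hb hab) ?_
      have hb' : b = 1 - a := by linarith
      subst hb'
      rcases ha.eq_or_lt with h0 | h0
      · subst h0; simpa using hy
      · nlinarith
    · intro x hx
      simpa only [Set.mem_ofPred_eq, hQs] using hx
  have hχ0 : ∀ t, t ≤ M → 0 ≤ χ t := fun t ht => by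
    rw [hχe]; exact intervalIntegral.integral_nonneg ht fun s _ => hK0 s
  have hi1 : IntegrableOn (fun z => χ (Q z)) C := (hχc.comp hQ).continuousOn.integrableOn_compact hC
  have hi2 : IntegrableOn (fun z => χ (Q (z + v))) C :=
    (hχc.comp hQv).continuousOn.integrableOn_compact hC
  rw [← ofReal_integral_eq_lintegral_ofReal hi1 ((ae_restrict_mem hC.measurableSet).mono
      fun z hz => hχ0 _ (hb1 z hz)),
    ← ofReal_integral_eq_lintegral_ofReal hi2 ((ae_restrict_mem hC.measurableSet).mono
      fun z hz => hχ0 _ (hb2 z hz)),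
    ENNReal.ofReal_le_ofReal_iff (setIntegral_nonneg hC.measurableSet fun z hz => hχ0 _ (hb1 z hz))]
    at main
  have hc : IntegrableOn (fun _ : Fin n → ℝ => ∫ s in (0:ℝ)..M, K s) C :=
    continuous_const.continuousOn.integrableOn_compact hC
  simp only [hχ] at main
  have ha1 : IntegrableOn (fun z => ∫ s in (0:ℝ)..Q z, K s) C :=
    (hac.comp hQ).continuousOn.integrableOn_compact hC
  have ha2 : IntegrableOn (fun z => ∫ s in (0:ℝ)..Q (z + v), K s) C :=
    (hac.comp hQv).continuousOn.integrableOn_compact hC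
  rw [integral_sub hc ha1, integral_sub hc ha2] at main
  linarith

lemma second_deriv_nonneg {A A' : ℝ → ℝ} {c : ℝ} (h1 : ∀ h, HasDerivAt A (A' h) h)
    (h2 : HasDerivAt A' c 0) (hmin : ∀ h, A 0 ≤ A h) : 0 ≤ c := by
  by_contra hc
  push Not at hc
  have hA0 : A' 0 = 0 :=
    IsLocalMin.hasDerivAt_eq_zero (Filter.Eventually.of_forall hmin) (h1 0)
  have hs := h2.tendsto_slope_zero_right
  have hev := hs.eventually (gt_mem_nhds hc)
  rw [eventually_nhdsWithin_iff, Metric.eventually_nhds_iff] at hev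
  obtain ⟨η, hη, hev⟩ := hev
  have hneg : ∀ h ∈ Set.Ioo (0:ℝ) (η / 2), A' h < 0 := by
    intro h hh
    have := hev (y := h) (by rw [Real.dist_eq, sub_zero, abs_of_pos hh.1]; linarith [hh.2]) hh.1
    simp only [zero_add, hA0, sub_zero, smul_eq_mul] at this
    have hh1 : 0 < h⁻¹ := inv_pos.2 hh.1
    by_contra hcon
    push Not at hcon
    exact absurd this (not_lt.2 (mul_nonneg hh1.le hcon))
  have hanti : StrictAntiOn A (Set.Icc 0 (η / 2)) := by
    refine strictAntiOn_of_deriv_neg (convex_Icc _ _)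
      (fun x _ => (h1 x).continuousAt.continuousWithinAt) ?_
    intro x hx
    rw [interior_Icc] at hx
    rw [(h1 x).deriv]
    exact hneg x hx
  have := hanti (Set.left_mem_Icc.2 (by linarith)) (Set.right_mem_Icc.2 (by linarith))
    (show (0:ℝ) < η / 2 by linarith)
  exact absurd this (not_lt.2 (hmin _))

lemma qq_add_single {n : ℕ} (z : Fin n → ℝ) (i : Fin n) (h : ℝ) :
    qq (z + h • Pi.single i (1:ℝ)) = qq z + 2 * h * z i + h ^ 2 := by
  unfold qq
  have : ∀ j, (z + h • (Pi.single i (1:ℝ) : Fin n → ℝ)) j ^ 2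
      = z j ^ 2 + (Pi.single i (2 * h * z i + h ^ 2) : Fin n → ℝ) j := by
    intro j
    by_cases hj : j = i
    · subst hj; simp; ring
    · simp [hj]
  simp only [this, Finset.sum_add_distrib]
  simp
  ring

lemma rho_nonneg {n : ℕ} {C : Set (Fin n → ℝ)} (hC : IsCompact C) (hCc : Convex ℝ C)
    (hCs : ∀ x ∈ C, -x ∈ C) {K : ℝ → ℝ} (hK : Continuous K) (hK0 : ∀ s, 0 ≤ K s)
    (i : Fin n) {ki : (Fin n → ℝ) → ℝ} (hkc : Continuous ki)
    (hki : ∀ x (h : ℝ), HasDerivAt (fun h : ℝ => K (qq (x + h • Pi.single i (1:ℝ))))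
      (ki (x + h • Pi.single i (1:ℝ))) h) {s : ℝ} (hs : 0 < s) :
    0 ≤ ∫ y in C, (K (qq (y + ((s - 1) * y i) • Pi.single i (1:ℝ)))
      + s * (y i * ki (y + ((s - 1) * y i) • Pi.single i (1:ℝ)))) := by
  set e : Fin n → ℝ := Pi.single i (1:ℝ) with he
  set S : (Fin n → ℝ) → (Fin n → ℝ) := fun y => y + ((s - 1) * y i) • e with hS
  have hei : e i = 1 := by simp [he]
  have hSi : ∀ y, S y i = s * y i := fun y => by simp [hS, hei]; ring
  have hScont : Continuous S := by simp only [hS]; fun_prop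
  have hii : ∀ a b, IntervalIntegrable K volume a b := fun a b => hK.intervalIntegrable a b
  have had : ∀ t, HasDerivAt (fun t => ∫ s in (0:ℝ)..t, K s) (K t) t := fun t =>
      intervalIntegral.integral_hasDerivAt_right (hii 0 t)
        hK.stronglyMeasurable.stronglyMeasurableAtFilter hK.continuousAt
  have hac : Continuous fun t => ∫ s in (0:ℝ)..t, K s :=
    continuous_iff_continuousAt.2 fun t => (had t).continuousAt
  have hqd : ∀ (z : Fin n → ℝ) (h : ℝ), HasDerivAt (fun h : ℝ => qq (z + h • e)) (2 * (z i + h)) h := by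
    intro z h
    simp only [he, qq_add_single]
    have h1 : HasDerivAt (fun h : ℝ => qq z + 2 * h * z i + h ^ 2) (2 * 1 * z i + 2 * h) h := by
      have := (((hasDerivAt_id h).const_mul 2).mul_const (z i)).const_add (qq z)
      have h2 : HasDerivAt (fun h : ℝ => h ^ 2) (2 * h) h := by simpa using hasDerivAt_pow 2 h
      exact this.add h2
    convert h1 using 1; ring
  have hqc : Continuous fun p : ℝ × (Fin n → ℝ) => qq (S p.2 + p.1 • e) :=
    qq_cont.comp (by fun_prop)
  have hkic : Continuous fun p : ℝ × (Fin n → ℝ) => ki (S p.2 + p.1 • e) :=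
    hkc.comp (by fun_prop)
  have h1 := fun h => hasDerivAt_setIntegral hC
    (F := fun h y => ∫ s in (0:ℝ)..qq (S y + h • e), K s)
    (F' := fun h y => K (qq (S y + h • e)) * (2 * (S y i + h)))
    (hac.comp hqc) ((hK.comp hqc).mul (by fun_prop))
    (fun h y => (had _).comp h (hqd (S y) h)) h
  have h2 := hasDerivAt_setIntegral hC
    (F := fun h y => K (qq (S y + h • e)) * (2 * (S y i + h)))
    (F' := fun h y => ki (S y + h • e) * (2 * (S y i + h)) + K (qq (S y + h • e)) * 2)
    ((hK.comp hqc).mul (by fun_prop)) ((hkic.mul (by fun_prop)).add ((hK.comp hqc).mul (by fun_prop)))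
    (fun h y => by
      refine (hki (S y) h).mul ?_
      simpa using ((hasDerivAt_id h).const_add (S y i)).const_mul 2) 0
  have h3 := second_deriv_nonneg h1 h2 (fun h => by
    have := int_min hC hCc hCs hK hK0 (Q := fun y => qq (S y)) (qq_cont.comp hScont)
      (fun x => qq_nonneg _) (fun x => by
        rw [← qq_neg (S x)]; congr 1; ext j; simp [hS]; ring) (fun x y a b ha hb hab => by
        have : S (a • x + b • y) = a • S x + b • S y := by
          ext j; simp [hS]; ring
        rw [this]; exact qq_convex _ _ ha hb hab) ((h / s) • e)
    have hs2 : ∀ z, S (z + (h / s) • e) = S z + h • e := by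
      intro z; ext j; simp [hS, hei]; field_simp; ring
    simpa only [hs2, zero_smul, add_zero] using this)
  have h4 : (∫ y in C, (ki (S y + (0:ℝ) • e) * (2 * (S y i + 0)) + K (qq (S y + (0:ℝ) • e)) * 2))
      = 2 * ∫ y in C, (K (qq (S y)) + s * (y i * ki (S y))) := by
    rw [← integral_const_mul]
    refine integral_congr_ae (ae_of_all _ fun y => ?_)
    simp only [zero_smul, add_zero, hSi]; ring
  rw [h4] at h3
  linarith

lemma coord_mono {n : ℕ} {C : Set (Fin n → ℝ)} (hC : IsCompact C) (hCc : Convex ℝ C)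
    (hCs : ∀ x ∈ C, -x ∈ C) {K : ℝ → ℝ} (hK : Continuous K) (hK0 : ∀ s, 0 ≤ K s)
    (i : Fin n) {ki : (Fin n → ℝ) → ℝ} (hkc : Continuous ki)
    (hki : ∀ x (h : ℝ), HasDerivAt (fun h : ℝ => K (qq (x + h • Pi.single i (1:ℝ))))
      (ki (x + h • Pi.single i (1:ℝ))) h) {s : ℝ} (hs : 1 ≤ s) :
    ∫ y in C, K (qq y) ≤
      ∫ y in C, s * K (qq (y + ((s - 1) * y i) • Pi.single i (1:ℝ))) := by
  set e : Fin n → ℝ := Pi.single i (1:ℝ) with he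
  have hc1 : Continuous fun p : ℝ × (Fin n → ℝ) => qq (p.2 + ((p.1 - 1) * p.2 i) • e) :=
    qq_cont.comp (by fun_prop)
  have hc2 : Continuous fun p : ℝ × (Fin n → ℝ) => ki (p.2 + ((p.1 - 1) * p.2 i) • e) :=
    hkc.comp (by fun_prop)
  have h1 := fun s => hasDerivAt_setIntegral hC
    (F := fun s y => s * K (qq (y + ((s - 1) * y i) • e)))
    (F' := fun s y => K (qq (y + ((s - 1) * y i) • e))
      + s * (y i * ki (y + ((s - 1) * y i) • e)))
    (continuous_fst.mul (hK.comp hc1)) ((hK.comp hc1).add (continuous_fst.mul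
      (Continuous.mul (by fun_prop) hc2)))
    (fun s y => by
      have h2 : HasDerivAt (fun s : ℝ => (s - 1) * y i) (y i) s := by
        simpa using ((hasDerivAt_id s).sub_const 1).mul_const (y i)
      have h3 := (hki y ((s - 1) * y i)).comp s h2
      have h4 : HasDerivAt (fun s => s * K (qq (y + ((s - 1) * y i) • e)))
        (1 * K (qq (y + ((s - 1) * y i) • e)) + s * (ki (y + ((s - 1) * y i) • e) * y i)) s :=
        (hasDerivAt_id s).mul h3
      convert h4 using 1
      ring) s
  have hm : MonotoneOn (fun s : ℝ => ∫ y in C, s * K (qq (y + ((s - 1) * y i) • e))) (Set.Ici 1) := by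
    refine monotoneOn_of_deriv_nonneg (convex_Ici 1)
      (fun x _ => (h1 x).continuousAt.continuousWithinAt)
      (fun x _ => (h1 x).differentiableAt.differentiableWithinAt) fun x hx => ?_
    rw [interior_Ici] at hx
    rw [(h1 x).deriv]
    exact rho_nonneg hC hCc hCs hK hK0 i hkc hki (lt_trans one_pos hx)
  have := hm (Set.mem_Ici.2 le_rfl) (Set.mem_Ici.2 hs) hs
  simpa using this

lemma coord_meas {n : ℕ} {C : Set (Fin n → ℝ)} (hC : IsCompact C) (hCc : Convex ℝ C)
    (hCs : ∀ x ∈ C, -x ∈ C) {K : ℝ → ℝ} (hK : Continuous K) (hK0 : ∀ s, 0 ≤ K s)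
    (i : Fin n) {ki : (Fin n → ℝ) → ℝ} (hkc : Continuous ki)
    (hki : ∀ x (h : ℝ), HasDerivAt (fun h : ℝ => K (qq (x + h • Pi.single i (1:ℝ))))
      (ki (x + h • Pi.single i (1:ℝ))) h) {d : ℝ} (hd : 0 < d) (hd1 : d ≤ 1) :
    ∫⁻ y in C, ENNReal.ofReal (K (qq y)) ≤
      ∫⁻ y in {y | Function.update y i (d * y i) ∈ C}, ENNReal.ofReal (K (qq y)) := by
  set e : Fin n → ℝ := Pi.single i (1:ℝ) with he
  set s := d⁻¹ with hsd
  have hs : 1 ≤ s := (one_le_inv₀ hd).2 hd1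
  have hs0 : 0 < s := lt_of_lt_of_le one_pos hs
  have hKq : Continuous fun y : Fin n → ℝ => K (qq y) := hK.comp qq_cont
  have hcS : Continuous fun y : Fin n → ℝ => y + ((s - 1) * y i) • e := by fun_prop
  have key := coord_mono hC hCc hCs hK hK0 i hkc hki hs
  have hi1 : IntegrableOn (fun y => K (qq y)) C := hKq.continuousOn.integrableOn_compact hC
  have hi2 : IntegrableOn (fun y => s * K (qq (y + ((s - 1) * y i) • e))) C :=
    (continuous_const.mul (hKq.comp hcS)).continuousOn.integrableOn_compact hC
  have key2 := ENNReal.ofReal_le_ofReal key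
  rw [ofReal_integral_eq_lintegral_ofReal hi1 (ae_of_all _ fun y => hK0 _),
    ofReal_integral_eq_lintegral_ofReal hi2 (ae_of_all _ fun y => mul_nonneg hs0.le (hK0 _))] at key2
  refine key2.trans (le_of_eq ?_)
  simp only [ENNReal.ofReal_mul hs0.le]
  have hm1 : Measurable fun y : Fin n → ℝ => ENNReal.ofReal (K (qq (y + ((s - 1) * y i) • e))) :=
    (hKq.comp hcS).measurable.ennreal_ofReal
  rw [lintegral_const_mul _ hm1]
  -- change of variables
  set D : Fin n → ℝ := Function.update 1 i s with hD
  have hdet : (diagonal D).det = s := by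
    rw [det_diagonal, hD, Finset.prod_update_of_mem (Finset.mem_univ i)]; simp
  have hlin : ∀ y, toLin' (diagonal D) y = y + ((s - 1) * y i) • e := by
    intro y; ext j
    rw [toLin'_apply, mulVec_diagonal]
    by_cases hj : j = i
    · subst hj; simp [hD, he]; ring
    · simp [hD, he, hj]
  have hvol := Real.smul_map_diagonal_volume_pi (D := D) (by rw [hdet]; exact hs0.ne')
  rw [hdet, abs_of_pos hs0] at hvol
  have hmS : Measurable (toLin' (diagonal D)) := by
    have : (⇑(toLin' (diagonal D)) : (Fin n → ℝ) → Fin n → ℝ) = _ := funext hlin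
    rw [this]; exact hcS.measurable
  have hup : Measurable fun y : Fin n → ℝ => Function.update y i (d * y i) := by
    refine Continuous.measurable ?_
    fun_prop
  have hmset : MeasurableSet {y : Fin n → ℝ | Function.update y i (d * y i) ∈ C} :=
    hup hC.measurableSet
  conv_rhs => rw [← hvol]
  rw [Measure.restrict_smul, lintegral_smul_measure, smul_eq_mul,
    setLIntegral_map hmset hKq.measurable.ennreal_ofReal hmS]
  congr 1
  simp only [hlin]
  congr 2
  ext y
  simp only [Set.mem_preimage, Set.mem_ofPred_eq, hlin]
  have : Function.update (y + ((s - 1) * y i) • e) i (d * (y + ((s - 1) * y i) • e) i) = y := by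
    ext j
    by_cases hj : j = i
    · subst hj; simp [he, hsd]; field_simp; ring
    · simp [he, hj]
  rw [this]

lemma diag_meas {n : ℕ} {K : ℝ → ℝ} (hK : Continuous K) (hK0 : ∀ s, 0 ≤ K s)
    {ki : Fin n → (Fin n → ℝ) → ℝ} (hkc : ∀ i, Continuous (ki i))
    (hki : ∀ i x (h : ℝ), HasDerivAt (fun h : ℝ => K (qq (x + h • Pi.single i (1:ℝ))))
      (ki i (x + h • Pi.single i (1:ℝ))) h) {d : Fin n → ℝ} (hd : ∀ i, 0 < d i) (hd1 : ∀ i, d i ≤ 1)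
    {C : Set (Fin n → ℝ)} (hC : IsCompact C) (hCc : Convex ℝ C)
    (hCs : ∀ x ∈ C, -x ∈ C) :
    ∫⁻ y in C, ENNReal.ofReal (K (qq y)) ≤
      ∫⁻ y in {y | d * y ∈ C}, ENNReal.ofReal (K (qq y)) := by
  suffices H : ∀ T : Finset (Fin n), ∫⁻ y in C, ENNReal.ofReal (K (qq y)) ≤
      ∫⁻ y in {y | (fun i => (if i ∈ T then d i else 1) * y i) ∈ C}, ENNReal.ofReal (K (qq y)) by
    have h1 := H Finset.univ
    simp only [Finset.mem_univ, if_true] at h1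
    exact h1
  intro T
  induction T using Finset.induction_on with
  | empty =>
    simp only [Finset.notMem_empty, if_false, one_mul]
    exact le_rfl
  | insert i T hi ih =>
    refine ih.trans ?_
    set d' : Fin n → ℝ := fun i => if i ∈ T then d i else 1 with hd'
    have hd'0 : ∀ i, 0 < d' i := fun i => by
      simp only [hd']; split_ifs; exacts [hd i, one_pos]
    set C' : Set (Fin n → ℝ) := {y | (fun i => d' i * y i) ∈ C} with hC'
    have hC'e : C' = (fun y i => (d' i)⁻¹ * y i) '' C := by
      ext y
      constructor
      · intro hy
        refine ⟨_, hy, ?_⟩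
        ext j; simp [(hd'0 j).ne']
      · rintro ⟨z, hz, rfl⟩
        simpa [hC', (hd'0 _).ne'] using hz
    have hC'c : IsCompact C' := by
      rw [hC'e]; exact hC.image (by fun_prop)
    refine (coord_meas hC'c ?_ ?_ hK hK0 i (hkc i) (hki i) (hd i) (hd1 i)).trans (le_of_eq ?_)
    · intro x hx y hy a b ha hb hab
      have := hCc hx hy ha hb hab
      simp only [hC', Set.mem_ofPred_eq]
      convert this using 1
      ext j; simp; ring
    · intro x hx
      have := hCs _ hx
      simp only [hC', Set.mem_ofPred_eq]
      convert this using 1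
      ext j; simp
    · congr 2
      ext y
      simp only [hC', Set.mem_ofPred_eq]
      have : (fun j => d' j * Function.update y i (d i * y i) j)
          = fun j => (if j ∈ insert i T then d j else 1) * y j := by
        ext j
        by_cases hj : j = i
        · subst hj; simp [hd', hi]
        · simp [hd', hj]
      rw [this]

/-- characteristic function of a measure on `ℝⁿ` -/
noncomputable def cfm {n : ℕ} (ν : Measure (Fin n → ℝ)) (t : Fin n → ℝ) : ℂ :=
  ∫ x, Complex.exp (((∑ i, t i * x i : ℝ) : ℂ) * Complex.I) ∂ν

lemma cfm_ext {n : ℕ} {μ ν : Measure (Fin n → ℝ)} [IsFiniteMeasure μ] [IsFiniteMeasure ν]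
    (h : ∀ t, cfm μ t = cfm ν t) : μ = ν := by
  refine Measure.ext_of_charFunDual (funext fun L => ?_)
  have hL : ∀ x : Fin n → ℝ, L x = ∑ i, L (Pi.single i 1) * x i := by
    intro x
    have hx : x = ∑ i, x i • (Pi.single i (1:ℝ) : Fin n → ℝ) := by
      ext j; simp [Finset.sum_apply, Pi.single_apply]
    conv_lhs => rw [hx]
    simp [map_sum, mul_comm]
  have := h (fun i => L (Pi.single i 1))
  simp only [cfm, ← hL] at this
  rw [charFunDual_apply, charFunDual_apply]
  exact this

lemma expc_meas {n : ℕ} (t : Fin n → ℝ) :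
    Measurable fun x : Fin n → ℝ => Complex.exp (((∑ i, t i * x i : ℝ) : ℂ) * Complex.I) := by
  fun_prop

lemma qq_dot {n : ℕ} (x : Fin n → ℝ) : qq x = x ⬝ᵥ x := by
  simp [qq, dotProduct, sq]

/-- Householder reflection -/
noncomputable def hh {n : ℕ} (u z : Fin n → ℝ) : Fin n → ℝ := z - (2 * (z ⬝ᵥ u) / (u ⬝ᵥ u)) • u

lemma hh_dot {n : ℕ} (u s z : Fin n → ℝ) : s ⬝ᵥ hh u z = hh u s ⬝ᵥ z := by
  simp only [hh, dotProduct_sub, sub_dotProduct, dotProduct_smul, smul_dotProduct, smul_eq_mul]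
  rw [dotProduct_comm u z]; ring

lemma hh_qq {n : ℕ} (u z : Fin n → ℝ) : qq (hh u z) = qq z := by
  by_cases hu : u ⬝ᵥ u = 0
  · simp [hh, hu]
  simp only [qq_dot, hh, dotProduct_sub, sub_dotProduct, dotProduct_smul, smul_dotProduct, smul_eq_mul]
  rw [dotProduct_comm u z]; field_simp; ring

lemma hh_sub {n : ℕ} (u x z : Fin n → ℝ) : hh u (x - z) = hh u x - hh u z := by
  ext j; simp [hh, sub_dotProduct]; ring

lemma hh_cont {n : ℕ} (u : Fin n → ℝ) : Continuous (hh u) := by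
  unfold hh dotProduct; fun_prop

lemma hh_map {n : ℕ} {x y : Fin n → ℝ} (h : qq x = qq y) : hh (x - y) x = y := by
  by_cases hu : (x - y) ⬝ᵥ (x - y) = 0
  · have : x - y = 0 := dotProduct_self_eq_zero.1 hu
    simp [hh, sub_eq_zero.1 this]
  have : 2 * (x ⬝ᵥ (x - y)) / ((x - y) ⬝ᵥ (x - y)) = 1 := by
    rw [div_eq_one_iff_eq hu]
    rw [qq_dot, qq_dot] at h
    simp only [dotProduct_sub, sub_dotProduct, dotProduct_comm y x]; linarith
  rw [hh, this]; simp

lemma map_hh {n : ℕ} {ν : Measure (Fin n → ℝ)} [IsFiniteMeasure ν]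
    (hν : ∀ s t, qq s = qq t → cfm ν s = cfm ν t) (u : Fin n → ℝ) : ν.map (hh u) = ν := by
  refine cfm_ext fun t => ?_
  have hm := (hh_cont u).measurable
  rw [cfm, integral_map hm.aemeasurable (expc_meas t).aestronglyMeasurable]
  rw [← hν (hh u t) t (hh_qq u t), cfm]
  have : ∀ x, (∑ i, t i * hh u x i) = ∑ i, hh u t i * x i := fun x => hh_dot u t x
  simp only [this]

/-- mollified density -/
noncomputable def kk {n : ℕ} (ν : Measure (Fin n → ℝ)) (x : Fin n → ℝ) : ℝ :=
  ∫ z, Real.exp (-qq (x - z)) ∂ν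

noncomputable def kki {n : ℕ} (ν : Measure (Fin n → ℝ)) (i : Fin n) (x : Fin n → ℝ) : ℝ :=
  ∫ z, Real.exp (-qq (x - z)) * (-(2 * (x i - z i))) ∂ν

lemma kk_nonneg {n : ℕ} (ν : Measure (Fin n → ℝ)) (x : Fin n → ℝ) : 0 ≤ kk ν x :=
  integral_nonneg fun _ => (Real.exp_pos _).le

lemma kk_radial {n : ℕ} {ν : Measure (Fin n → ℝ)} [IsFiniteMeasure ν]
    (hν : ∀ s t, qq s = qq t → cfm ν s = cfm ν t) {x y : Fin n → ℝ} (h : qq x = qq y) :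
    kk ν x = kk ν y := by
  have hc : Continuous fun z => Real.exp (-qq (y - z)) :=
    Real.continuous_exp.comp (qq_cont.comp (by fun_prop)).neg
  have h1 : kk ν y = ∫ z, Real.exp (-qq (y - z)) ∂(ν.map (hh (x - y))) := by
    rw [map_hh hν]; rfl
  rw [h1, integral_map (hh_cont _).measurable.aemeasurable hc.aestronglyMeasurable]
  unfold kk
  congr 1; ext z
  rw [← hh_qq (x - y) (x - z), hh_sub, hh_map h]

lemma exp_bd {q : ℝ} (hq : 0 ≤ q) : ‖Real.exp (-q)‖ ≤ 1 := by
  rw [Real.norm_eq_abs, abs_of_pos (Real.exp_pos _)]; simpa using hq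

lemma exp_bd2 {n : ℕ} (w : Fin n → ℝ) (i : Fin n) : ‖Real.exp (-qq w) * (-(2 * w i))‖ ≤ 1 := by
  rw [Real.norm_eq_abs, abs_mul, abs_of_pos (Real.exp_pos _), abs_neg, Real.exp_neg,
    inv_mul_le_iff₀ (Real.exp_pos _), mul_one]
  have h1 : w i ^ 2 ≤ qq w :=
    Finset.single_le_sum (f := fun i => w i ^ 2) (fun j _ => sq_nonneg (w j)) (Finset.mem_univ i)
  have h2 := Real.add_one_le_exp (qq w)
  rw [abs_mul, abs_two]
  nlinarith [sq_nonneg (|w i| - 1), sq_abs (w i)]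

lemma kk_cont {n : ℕ} (ν : Measure (Fin n → ℝ)) [IsFiniteMeasure ν] : Continuous (kk ν) := by
  refine continuous_of_dominated (bound := fun _ => 1) (fun x => ?_) (fun x => ae_of_all _ fun z => ?_)
    (integrable_const _) (ae_of_all _ fun z => ?_)
  · exact (Real.continuous_exp.comp (qq_cont.comp (by fun_prop)).neg).aestronglyMeasurable
  · exact exp_bd (qq_nonneg _)
  · exact (Real.continuous_exp.comp (qq_cont.comp (by fun_prop)).neg)

lemma kki_cont {n : ℕ} (ν : Measure (Fin n → ℝ)) [IsFiniteMeasure ν] (i : Fin n) :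
    Continuous (kki ν i) := by
  refine continuous_of_dominated (bound := fun _ => 1) (fun x => ?_) (fun x => ae_of_all _ fun z => ?_)
    (integrable_const _) (ae_of_all _ fun z => ?_)
  · exact ((Real.continuous_exp.comp (qq_cont.comp (by fun_prop)).neg).mul
      (by fun_prop)).aestronglyMeasurable
  · exact exp_bd2 (x - z) i
  · exact (Real.continuous_exp.comp (qq_cont.comp (by fun_prop)).neg).mul (by fun_prop)

lemma kk_deriv {n : ℕ} (ν : Measure (Fin n → ℝ)) [IsFiniteMeasure ν] (i : Fin n)
    (x : Fin n → ℝ) (h : ℝ) :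
    HasDerivAt (fun h : ℝ => kk ν (x + h • Pi.single i (1:ℝ)))
      (kki ν i (x + h • Pi.single i (1:ℝ))) h := by
  have hc : ∀ y : Fin n → ℝ, Continuous fun z => Real.exp (-qq (y - z)) := fun y =>
    Real.continuous_exp.comp (qq_cont.comp (by fun_prop)).neg
  have hdd : ∀ (z : Fin n → ℝ) (t : ℝ), HasDerivAt
      (fun t : ℝ => Real.exp (-qq (x + t • Pi.single i (1:ℝ) - z)))
      (Real.exp (-qq (x + t • Pi.single i (1:ℝ) - z)) *
        (-(2 * ((x + t • Pi.single i (1:ℝ) : Fin n → ℝ) i - z i)))) t := by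
    intro z t
    have h0 : ∀ t : ℝ, x + t • (Pi.single i (1:ℝ) : Fin n → ℝ) - z
      = (x - z) + t • (Pi.single i (1:ℝ) : Fin n → ℝ) := fun t => by abel
    have h1 : HasDerivAt (fun t : ℝ => -(qq (x - z) + 2 * t * (x - z) i + t ^ 2))
        (-(2 * 1 * (x - z) i + 2 * t)) t := by
      have := (((hasDerivAt_id t).const_mul 2).mul_const ((x - z) i)).const_add (qq (x - z))
      have h2 : HasDerivAt (fun h : ℝ => h ^ 2) (2 * t) t := by simpa using hasDerivAt_pow 2 t
      exact (this.add h2).neg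
    have h3 := h1.exp
    simp only [h0, qq_add_single]
    convert h3 using 1
    simp; ring
  unfold kk kki
  generalize (Pi.single i (1:ℝ) : Fin n → ℝ) = e at hdd ⊢
  have h1 : ∀ᶠ t in nhds h, AEStronglyMeasurable (fun z => Real.exp (-qq (x + t • e - z))) ν :=
    Filter.Eventually.of_forall fun t => (hc _).aestronglyMeasurable
  have h2 : Integrable (fun z => Real.exp (-qq (x + h • e - z))) ν :=
    Integrable.of_bound (hc _).aestronglyMeasurable 1 (ae_of_all _ fun z => exp_bd (qq_nonneg _))
  have h3 : AEStronglyMeasurable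
      (fun z => Real.exp (-qq (x + h • e - z)) * (-(2 * ((x + h • e) i - z i)))) ν :=
    ((hc _).mul (by fun_prop)).aestronglyMeasurable
  exact (hasDerivAt_integral_of_dominated_loc_of_deriv_le (μ := ν) (s := Set.univ)
    (F := fun (t : ℝ) z => Real.exp (-qq (x + t • e - z)))
    (F' := fun (t : ℝ) z => Real.exp (-qq (x + t • e - z)) * (-(2 * ((x + t • e) i - z i))))
    (bound := fun _ => 1) Filter.univ_mem h1 h2 h3
    (ae_of_all _ fun z t _ => exp_bd2 (x + t • e - z) i) (integrable_const _)
    (ae_of_all _ fun z t _ => hdd z t)).2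

/-- unnormalised Gaussian -/
noncomputable def gam (n : ℕ) : Measure (Fin n → ℝ) :=
  volume.withDensity fun g => ENNReal.ofReal (Real.exp (-qq g))

lemma eq_cont {n : ℕ} : Continuous fun g : Fin n → ℝ => Real.exp (-qq g) :=
  Real.continuous_exp.comp qq_cont.neg

instance gam_finite (n : ℕ) : IsFiniteMeasure (gam n) := by
  refine isFiniteMeasure_withDensity_ofReal ?_
  have h1 : Integrable (fun x : Fin n → ℝ => ∏ i, Real.exp (-1 * x i ^ 2)) :=
    Integrable.fintype_prod fun i => integrable_exp_neg_mul_sq one_pos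
  have : (fun x : Fin n → ℝ => ∏ i, Real.exp (-1 * x i ^ 2)) = fun x => Real.exp (-qq x) := by
    ext x; rw [← Real.exp_sum, qq, ← Finset.sum_neg_distrib]; simp
  rw [this] at h1
  exact h1.2

lemma gam_ne (n : ℕ) : gam n Set.univ ≠ 0 := by
  intro h
  rw [gam, withDensity_apply _ MeasurableSet.univ, Measure.restrict_univ,
    lintegral_eq_zero_iff eq_cont.measurable.ennreal_ofReal] at h
  have h2 : ∀ᵐ x : Fin n → ℝ, False := h.mono fun x hx => by
    simp only [Pi.zero_apply, ENNReal.ofReal_eq_zero] at hx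
    exact absurd hx (not_le.2 (Real.exp_pos _))
  rw [Filter.eventually_false_iff_eq_bot, ae_eq_bot] at h2
  have h3 : (volume : Measure (Fin n → ℝ)) Set.univ ≠ 0 := isOpen_univ.measure_ne_zero volume ⟨0, trivial⟩
  rw [h2] at h3
  exact h3 rfl

lemma mol_eq {n : ℕ} (ν : Measure (Fin n → ℝ)) [IsFiniteMeasure ν] {B : Set (Fin n → ℝ)}
    (hB : MeasurableSet B) :
    ∫⁻ y in B, ENNReal.ofReal (kk ν y) = (ν.prod (gam n)) {p | p.1 + p.2 ∈ B} := by
  have hc : ∀ y : Fin n → ℝ, Continuous fun z => Real.exp (-qq (y - z)) := fun y =>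
    Real.continuous_exp.comp (qq_cont.comp (by fun_prop)).neg
  have h1 : ∀ y, ENNReal.ofReal (kk ν y) = ∫⁻ z, ENNReal.ofReal (Real.exp (-qq (y - z))) ∂ν := by
    intro y
    refine ofReal_integral_eq_lintegral_ofReal
      (Integrable.of_bound (hc _).aestronglyMeasurable 1 (ae_of_all _ fun z => exp_bd (qq_nonneg _)))
      (ae_of_all _ fun z => (Real.exp_pos _).le)
  simp only [h1]
  have hm2 : Measurable fun p : (Fin n → ℝ) × (Fin n → ℝ) => p.1 + p.2 := by fun_prop
  have hm5 : MeasurableSet {p : (Fin n → ℝ) × (Fin n → ℝ) | p.1 + p.2 ∈ B} := hm2 hB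
  rw [lintegral_lintegral_swap, Measure.prod_apply hm5]
  · refine lintegral_congr fun z => ?_
    have hm3 : Measurable fun g : Fin n → ℝ => z + g := by fun_prop
    have hm4 : MeasurableSet (Prod.mk z ⁻¹' {p : (Fin n → ℝ) × (Fin n → ℝ) | p.1 + p.2 ∈ B}) := hm3 hB
    rw [gam, withDensity_apply _ hm4, ← lintegral_indicator hB, ← lintegral_indicator hm4,
      ← lintegral_add_left_eq_self _ z]
    refine lintegral_congr fun g => ?_
    simp [Set.indicator]
  · have : Continuous fun p : (Fin n → ℝ) × (Fin n → ℝ) => Real.exp (-qq (p.1 - p.2)) :=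
      Real.continuous_exp.comp (qq_cont.comp (by fun_prop)).neg
    exact this.measurable.ennreal_ofReal.aemeasurable

lemma mol_compact {n : ℕ} {ν : Measure (Fin n → ℝ)} [IsFiniteMeasure ν]
    (hν : ∀ s t, qq s = qq t → cfm ν s = cfm ν t)
    {d : Fin n → ℝ} (hd : ∀ i, 0 < d i) (hd1 : ∀ i, d i ≤ 1)
    {C : Set (Fin n → ℝ)} (hC : IsCompact C) (hCc : Convex ℝ C)
    (hCs : ∀ x ∈ C, -x ∈ C) :
    (ν.prod (gam n)) {p | p.1 + p.2 ∈ C} ≤ (ν.prod (gam n)) {p | d * (p.1 + p.2) ∈ C} := by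
  set K : ℝ → ℝ := fun s => kk ν (fun _ => √(s / n)) with hK
  have hKq : ∀ x, K (qq x) = kk ν x := by
    intro x
    refine kk_radial hν ?_
    have h0 : 0 ≤ qq x / n := div_nonneg (qq_nonneg _) (Nat.cast_nonneg _)
    simp only [qq] at h0 ⊢
    rw [Real.sq_sqrt h0]
    rcases Nat.eq_zero_or_pos n with h | h
    · subst h; simp
    · have : (n : ℝ) ≠ 0 := by positivity
      simp; field_simp
  have hKc : Continuous K := (kk_cont ν).comp (by fun_prop)
  have key := diag_meas hKc (fun s => kk_nonneg ν _) (kki_cont ν)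
    (fun i x h => by simpa only [hKq] using kk_deriv ν i x h) hd hd1 hC hCc hCs
  have hm : Measurable fun y : Fin n → ℝ => d * y := by fun_prop
  have hm' : MeasurableSet {y : Fin n → ℝ | d * y ∈ C} := hm hC.measurableSet
  simp only [hKq] at key
  rw [mol_eq ν hC.measurableSet, mol_eq ν hm'] at key
  exact key

lemma mol_closed {n : ℕ} {ν : Measure (Fin n → ℝ)} [IsFiniteMeasure ν]
    (hν : ∀ s t, qq s = qq t → cfm ν s = cfm ν t)
    {d : Fin n → ℝ} (hd : ∀ i, 0 < d i) (hd1 : ∀ i, d i ≤ 1)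
    {C : Set (Fin n → ℝ)} (hC : IsClosed C) (hCc : Convex ℝ C)
    (hCs : ∀ x ∈ C, -x ∈ C) :
    (ν.prod (gam n)) {p | p.1 + p.2 ∈ C} ≤ (ν.prod (gam n)) {p | d * (p.1 + p.2) ∈ C} := by
  have hU : {p : (Fin n → ℝ) × (Fin n → ℝ) | p.1 + p.2 ∈ C}
      = ⋃ R : ℕ, {p | p.1 + p.2 ∈ C ∩ Metric.closedBall 0 (R : ℝ)} := by
    ext p
    simp only [Set.mem_ofPred_eq, Set.mem_iUnion, Set.mem_inter_iff, mem_closedBall_zero_iff]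
    constructor
    · intro h
      obtain ⟨R, hR⟩ := exists_nat_ge ‖p.1 + p.2‖
      exact ⟨R, h, hR⟩
    · rintro ⟨R, h, -⟩; exact h
  rw [hU, Monotone.measure_iUnion]
  · refine iSup_le fun R => ?_
    refine (mol_compact hν hd hd1 ((isCompact_closedBall (0 : Fin n → ℝ) (R : ℝ)).inter_left hC)
      (hCc.inter (convex_closedBall _ _)) ?_).trans (measure_mono ?_)
    · rintro x ⟨h1, h2⟩
      exact ⟨hCs x h1, by simpa using h2⟩
    · intro p hp
      exact hp.1
  · intro R R' h p hp
    exact ⟨hp.1, Metric.closedBall_subset_closedBall (by exact_mod_cast h) hp.2⟩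

lemma qq_smul {n : ℕ} (c : ℝ) (x : Fin n → ℝ) : qq (c • x) = c ^ 2 * qq x := by
  simp [qq, Finset.mul_sum, mul_pow]

lemma mol_scaled {n : ℕ} {ν : Measure (Fin n → ℝ)} [IsFiniteMeasure ν]
    (hν : ∀ s t, qq s = qq t → cfm ν s = cfm ν t)
    {d : Fin n → ℝ} (hd : ∀ i, 0 < d i) (hd1 : ∀ i, d i ≤ 1)
    {C : Set (Fin n → ℝ)} (hC : IsClosed C) (hCc : Convex ℝ C)
    (hCs : ∀ x ∈ C, -x ∈ C) {δ : ℝ} (hδ : 0 < δ) :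
    (ν.prod (gam n)) {p | p.1 + δ • p.2 ∈ C} ≤
      (ν.prod (gam n)) {p | d * (p.1 + δ • p.2) ∈ C} := by
  have hmδ : Measurable fun x : Fin n → ℝ => δ⁻¹ • x := by fun_prop
  have hν' : ∀ s t, qq s = qq t → cfm (ν.map fun x => δ⁻¹ • x) s = cfm (ν.map fun x => δ⁻¹ • x) t := by
    have : ∀ s, cfm (ν.map fun x => δ⁻¹ • x) s = cfm ν (δ⁻¹ • s) := by
      intro s
      rw [cfm, integral_map hmδ.aemeasurable (expc_meas s).aestronglyMeasurable, cfm]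
      simp only [Pi.smul_apply, smul_eq_mul]
      congr 1; ext x; congr 4; ext i; ring
    intro s t h
    rw [this, this]
    exact hν _ _ (by rw [qq_smul, qq_smul, h])
  have hcδ : Continuous fun x : Fin n → ℝ => δ • x := by fun_prop
  have key := mol_closed hν' hd hd1 (C := (fun x => δ • x) ⁻¹' C) (hC.preimage hcδ)
    (by
      intro x hx y hy a b ha hb hab
      have := hCc hx hy ha hb hab
      simp only [Set.mem_preimage]
      convert this using 1
      ext j; simp; ring)
    (by intro x hx; simpa using hCs _ hx)
  have hprod : (ν.map fun x => δ⁻¹ • x).prod (gam n)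
      = (ν.prod (gam n)).map (Prod.map (fun x => δ⁻¹ • x) id) := by
    rw [← Measure.map_prod_map _ _ hmδ measurable_id, Measure.map_id]
  have hmp : Measurable (Prod.map (fun x : Fin n → ℝ => δ⁻¹ • x) (id : (Fin n → ℝ) → _)) :=
    hmδ.prodMap measurable_id
  have hm1 : MeasurableSet {p : (Fin n → ℝ) × (Fin n → ℝ) | p.1 + p.2 ∈ (fun x => δ • x) ⁻¹' C} := by
    have : Continuous fun p : (Fin n → ℝ) × (Fin n → ℝ) => δ • (p.1 + p.2) := by fun_prop
    exact this.measurable hC.measurableSet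
  have hm2 : MeasurableSet
      {p : (Fin n → ℝ) × (Fin n → ℝ) | d * (p.1 + p.2) ∈ (fun x => δ • x) ⁻¹' C} := by
    have : Continuous fun p : (Fin n → ℝ) × (Fin n → ℝ) => δ • (d * (p.1 + p.2)) := by fun_prop
    exact this.measurable hC.measurableSet
  rw [hprod, Measure.map_apply hmp hm1, Measure.map_apply hmp hm2] at key
  have e1 : ∀ p : (Fin n → ℝ) × (Fin n → ℝ), δ • (δ⁻¹ • p.1 + p.2) = p.1 + δ • p.2 := by
    intro p; rw [smul_add, smul_inv_smul₀ hδ.ne']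
  have e2 : ∀ p : (Fin n → ℝ) × (Fin n → ℝ), δ • (d * (δ⁻¹ • p.1 + p.2)) = d * (p.1 + δ • p.2) := by
    intro p; rw [← e1, mul_smul_comm]
  simp only [Set.preimage_ofPred_eq, Prod.map_fst, Prod.map_snd, id, Set.mem_preimage, e1, e2] at key
  exact key

lemma sph_weak {n : ℕ} {ν : Measure (Fin n → ℝ)} [IsFiniteMeasure ν]
    (hν : ∀ s t, qq s = qq t → cfm ν s = cfm ν t)
    {d : Fin n → ℝ} (hd : ∀ i, 0 ≤ d i) (hd1 : ∀ i, d i ≤ 1)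
    {g : (Fin n → ℝ) → ℝ} (hg : Continuous g) (hgs : ∀ x, g (-x) = g x)
    (hgc : ∀ x y (a b : ℝ), 0 ≤ a → 0 ≤ b → a + b = 1 → g (a • x + b • y) ≤ a * g x + b * g y)
    (t : ℝ) : ν {z | t < g (d * z)} ≤ ν {z | t ≤ g z} := by
  set ρ := ν.prod (gam n) with hρ
  set δ : ℕ → ℝ := fun m => 1 / ((m : ℝ) + 1) with hδ
  have hδ0 : ∀ m, 0 < δ m := fun m => by simp only [hδ]; positivity
  have hδ1 : ∀ m, δ m ≤ 1 := fun m => by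
    simp only [hδ]; rw [div_le_one (by positivity)]
    have : (0:ℝ) ≤ m := Nat.cast_nonneg m
    linarith
  have hδt : Filter.Tendsto δ Filter.atTop (nhds 0) := tendsto_one_div_add_atTop_nhds_zero_nat
  set dm : ℕ → Fin n → ℝ := fun m => d + δ m • (1 - d) with hdm
  have hdm0 : ∀ m i, 0 < dm m i := fun m i => by
    have e : dm m i = (1 - δ m) * d i + δ m := by simp [hdm]; ring
    rcases (hd i).eq_or_lt with h | h
    · rw [e, ← h]; simpa using hδ0 m
    · rw [e]
      have := mul_nonneg (sub_nonneg.2 (hδ1 m)) (hd i)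
      linarith [hδ0 m]
  have hdm1 : ∀ m i, dm m i ≤ 1 := fun m i => by
    have e : dm m i = d i + δ m * (1 - d i) := by simp [hdm]
    rw [e]; nlinarith [hδ1 m, hd1 i]
  have hdmt : Filter.Tendsto dm Filter.atTop (nhds d) := by
    have : Filter.Tendsto dm Filter.atTop (nhds (d + (0:ℝ) • (1 - d))) :=
      tendsto_const_nhds.add (hδt.smul_const _)
    simpa using this
  set E : ℕ → Set ((Fin n → ℝ) × (Fin n → ℝ)) := fun m => {p | t < g (dm m * (p.1 + δ m • p.2))} with hE
  set F : ℕ → Set ((Fin n → ℝ) × (Fin n → ℝ)) := fun m => {p | t < g (p.1 + δ m • p.2)} with hF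
  have hEm : ∀ m, MeasurableSet (E m) := fun m => by
    have : Continuous fun p : (Fin n → ℝ) × (Fin n → ℝ) => g (dm m * (p.1 + δ m • p.2)) :=
      hg.comp (by fun_prop)
    exact measurableSet_lt measurable_const this.measurable
  have hFm : ∀ m, MeasurableSet (F m) := fun m => by
    have : Continuous fun p : (Fin n → ℝ) × (Fin n → ℝ) => g (p.1 + δ m • p.2) :=
      hg.comp (by fun_prop)
    exact measurableSet_lt measurable_const this.measurable
  have hEF : ∀ m, ρ (E m) ≤ ρ (F m) := by
    intro m
    have key := mol_scaled hν (hdm0 m) (hdm1 m) (C := {x | g x ≤ t}) (isClosed_le hg continuous_const)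
      (by
        intro x hx y hy a b ha hb hab
        simp only [Set.mem_ofPred_eq] at hx hy ⊢
        refine (hgc x y a b ha hb hab).trans ?_
        have : b = 1 - a := by linarith
        subst this
        nlinarith)
      (by intro x hx; simpa only [Set.mem_ofPred_eq, hgs] using hx) (hδ0 m)
    have e1 : {p : (Fin n → ℝ) × (Fin n → ℝ) | p.1 + δ m • p.2 ∈ {x | g x ≤ t}} = (F m)ᶜ := by
      ext p; simp [hF]
    have e2 : {p : (Fin n → ℝ) × (Fin n → ℝ) | dm m * (p.1 + δ m • p.2) ∈ {x | g x ≤ t}} = (E m)ᶜ := by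
      ext p; simp [hE]
    rw [e1, e2] at key
    have h1 := measure_compl (hEm m).compl (measure_ne_top ρ _)
    have h2 := measure_compl (hFm m).compl (measure_ne_top ρ _)
    rw [compl_compl] at h1 h2
    rw [h1, h2]
    exact tsub_le_tsub_left key _
  have hlow : ρ {p | t < g (d * p.1)} ≤ Filter.liminf (fun m => ρ (E m)) Filter.atTop := by
    have hm : MeasurableSet {p : (Fin n → ℝ) × (Fin n → ℝ) | t < g (d * p.1)} := by
      have : Continuous fun p : (Fin n → ℝ) × (Fin n → ℝ) => g (d * p.1) := hg.comp (by fun_prop)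
      exact measurableSet_lt measurable_const this.measurable
    have h1 := lintegral_liminf_le (μ := ρ) (u := Filter.atTop)
      (f := fun m => (E m).indicator (fun _ => (1:ℝ≥0∞))) (fun m => measurable_const.indicator (hEm m))
    simp only [lintegral_indicator_const (hEm _), one_mul] at h1
    refine le_trans ?_ h1
    rw [← one_mul (ρ _), ← lintegral_indicator_const hm]
    refine lintegral_mono fun p => ?_
    by_cases hp : t < g (d * p.1)
    · have ht : Filter.Tendsto (fun m => g (dm m * (p.1 + δ m • p.2))) Filter.atTop
          (nhds (g (d * (p.1 + (0:ℝ) • p.2)))) :=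
        (hg.tendsto _).comp (hdmt.mul (tendsto_const_nhds.add (hδt.smul_const _)))
      rw [zero_smul, add_zero] at ht
      have hev := ht.eventually (lt_mem_nhds hp)
      have : Filter.Tendsto (fun m => (E m).indicator (fun _ => (1:ℝ≥0∞)) p) Filter.atTop (nhds 1) :=
        tendsto_const_nhds.congr' (hev.mono fun m hm => by
          exact (Set.indicator_of_mem (show p ∈ E m from hm) (fun _ => (1:ℝ≥0∞))).symm)
      rw [this.liminf_eq]
      exact Set.indicator_le (fun _ _ => le_rfl) p
    · rw [Set.indicator_of_notMem (by exact hp)]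
      exact bot_le
  have hup : Filter.limsup (fun m => ρ (F m)) Filter.atTop ≤ ρ {p | t ≤ g p.1} := by
    have hm : MeasurableSet {p : (Fin n → ℝ) × (Fin n → ℝ) | t ≤ g p.1} := by
      have : Continuous fun p : (Fin n → ℝ) × (Fin n → ℝ) => g p.1 := hg.comp (by fun_prop)
      exact measurableSet_le measurable_const this.measurable
    have h1 := limsup_lintegral_le (μ := ρ) (fun _ => 1)
      (f := fun m => (F m).indicator (fun _ => (1:ℝ≥0∞))) (fun m => measurable_const.indicator (hFm m))
      (fun m => ae_of_all _ fun p => Set.indicator_le (fun _ _ => le_rfl) p)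
      (by rw [lintegral_const, one_mul]; exact measure_ne_top _ _)
    simp only [lintegral_indicator_const (hFm _), one_mul] at h1
    refine h1.trans ?_
    rw [← one_mul (ρ _), ← lintegral_indicator_const hm]
    refine lintegral_mono fun p => ?_
    by_cases hp : t ≤ g p.1
    · rw [Set.indicator_of_mem (by exact hp)]
      refine Filter.limsup_le_of_le (h := Filter.Eventually.of_forall fun m => ?_)
      exact Set.indicator_le (fun _ _ => le_rfl) p
    · have ht : Filter.Tendsto (fun m => g (p.1 + δ m • p.2)) Filter.atTop
          (nhds (g (p.1 + (0:ℝ) • p.2))) :=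
        (hg.tendsto _).comp (tendsto_const_nhds.add (hδt.smul_const _))
      rw [zero_smul, add_zero] at ht
      have hev := ht.eventually (gt_mem_nhds (not_le.1 hp))
      have : Filter.Tendsto (fun m => (F m).indicator (fun _ => (1:ℝ≥0∞)) p) Filter.atTop (nhds 0) :=
        tendsto_const_nhds.congr' (hev.mono fun m hm => by
          exact (Set.indicator_of_notMem (show p ∉ F m from not_lt.2 hm.le)
            (fun _ => (1:ℝ≥0∞))).symm)
      rw [this.limsup_eq]
      exact bot_le
  have hmain : ρ {p | t < g (d * p.1)} ≤ ρ {p | t ≤ g p.1} :=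
    hlow.trans ((Filter.liminf_le_liminf (Filter.Eventually.of_forall hEF)).trans
      ((Filter.liminf_le_limsup (u := fun m => ρ (F m))).trans hup))
  have e1 : {p : (Fin n → ℝ) × (Fin n → ℝ) | t < g (d * p.1)} = {z | t < g (d * z)} ×ˢ Set.univ := by
    ext p; simp
  have e2 : {p : (Fin n → ℝ) × (Fin n → ℝ) | t ≤ g p.1} = {z | t ≤ g z} ×ˢ Set.univ := by
    ext p; simp
  rw [e1, e2, hρ, Measure.prod_prod, Measure.prod_prod] at hmain
  exact (ENNReal.mul_le_mul_iff_left (gam_ne n) (measure_ne_top _ _)).1 hmain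

lemma sph_strong {n : ℕ} {ν : Measure (Fin n → ℝ)} [IsFiniteMeasure ν]
    (hν : ∀ s t, qq s = qq t → cfm ν s = cfm ν t)
    {d : Fin n → ℝ} (hd : ∀ i, 0 ≤ d i) (hd1 : ∀ i, d i ≤ 1)
    {g : (Fin n → ℝ) → ℝ} (hg : Continuous g) (hgs : ∀ x, g (-x) = g x)
    (hgc : ∀ x y (a b : ℝ), 0 ≤ a → 0 ≤ b → a + b = 1 → g (a • x + b • y) ≤ a * g x + b * g y)
    (t : ℝ) : ν {z | t < g (d * z)} ≤ ν {z | t < g z} := by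
  have hU : {z : Fin n → ℝ | t < g (d * z)} = ⋃ m : ℕ, {z | t + 1 / ((m:ℝ) + 1) < g (d * z)} := by
    ext z
    simp only [Set.mem_ofPred_eq, Set.mem_iUnion]
    constructor
    · intro h
      obtain ⟨m, hm⟩ := exists_nat_one_div_lt (sub_pos.2 h)
      exact ⟨m, by linarith⟩
    · rintro ⟨m, hm⟩
      have : (0:ℝ) < 1 / ((m:ℝ) + 1) := by positivity
      linarith
  rw [hU, Monotone.measure_iUnion]
  · refine iSup_le fun m => (sph_weak hν hd hd1 hg hgs hgc _).trans (measure_mono fun z hz => ?_)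
    have : (0:ℝ) < 1 / ((m:ℝ) + 1) := by positivity
    simp only [Set.mem_ofPred_eq] at hz ⊢
    linarith
  · intro a b hab z hz
    simp only [Set.mem_ofPred_eq] at hz ⊢
    have : 1 / ((b:ℝ) + 1) ≤ 1 / ((a:ℝ) + 1) := Nat.one_div_le_one_div hab
    linarith

lemma spec {n : ℕ} {Q : Matrix (Fin n) (Fin n) ℝ} (hQ : Q.PosSemidef) :
    ∃ (U : Matrix (Fin n) (Fin n) ℝ) (l : Fin n → ℝ), Uᵀ * U = 1 ∧ U * Uᵀ = 1 ∧ (∀ i, 0 ≤ l i) ∧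
      Q = U * diagonal l * Uᵀ := by
  have hH := hQ.isHermitian
  refine ⟨hH.eigenvectorUnitary, hH.eigenvalues, ?_, ?_, hQ.eigenvalues_nonneg, ?_⟩
  · have := Unitary.coe_star_mul_self hH.eigenvectorUnitary
    rwa [star_eq_conjTranspose, conjTranspose_eq_transpose_of_trivial] at this
  · have := Unitary.mul_star_self_of_mem hH.eigenvectorUnitary.2
    rwa [star_eq_conjTranspose, conjTranspose_eq_transpose_of_trivial] at this
  · have := hH.spectral_theorem
    rw [Unitary.conjStarAlgAut_apply, star_eq_conjTranspose,
      conjTranspose_eq_transpose_of_trivial] at this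
    exact this

lemma factor {n : ℕ} {Q : Matrix (Fin n) (Fin n) ℝ} (hQ : Q.PosSemidef) :
    ∃ (k : ℕ) (L : Matrix (Fin n) (Fin k) ℝ) (L' : Matrix (Fin k) (Fin n) ℝ),
      L * Lᵀ = Q ∧ L' * L = 1 := by
  obtain ⟨U, l, h1, -, hl, hQe⟩ := spec hQ
  classical
  let e := Fintype.equivFin {i // l i ≠ 0}
  refine ⟨_, Matrix.of fun a j => U a (e.symm j) * √(l (e.symm j)),
    Matrix.of fun j a => U a (e.symm j) / √(l (e.symm j)), ?_, ?_⟩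
  · ext a b
    rw [hQe, mul_apply, mul_apply]
    simp only [of_apply, transpose_apply, mul_diagonal]
    rw [Equiv.sum_comp e.symm (fun j : {i // l i ≠ 0} => U a j * √(l j) * (U b j * √(l j)))]
    rw [← Finset.sum_subtype (Finset.univ.filter fun i => l i ≠ 0) (by simp)
      (fun j => U a j * √(l j) * (U b j * √(l j))), Finset.sum_filter]
    refine Finset.sum_congr rfl fun j _ => ?_
    split_ifs with h
    · have := Real.mul_self_sqrt (hl j)
      calc _ = U a j * (√(l j) * √(l j)) * U b j := by ring
        _ = _ := by rw [this]
    · push Not at h; simp [h]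
  · ext j j'
    have h2 := congrFun (congrFun h1 (e.symm j)) (e.symm j')
    rw [mul_apply] at h2 ⊢
    simp only [of_apply, transpose_apply] at h2 ⊢
    have hp : ∀ j, 0 < √(l (e.symm j)) := fun j =>
      Real.sqrt_pos.2 (lt_of_le_of_ne (hl _) (e.symm j).2.symm)
    have : ∀ a, U a (e.symm j) / √(l (e.symm j)) * (U a (e.symm j') * √(l (e.symm j')))
        = (√(l (e.symm j')) / √(l (e.symm j))) * (U a (e.symm j) * U a (e.symm j')) := by
      intro a; ring
    simp only [this]
    rw [← Finset.mul_sum, h2]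
    by_cases hj : j = j'
    · subst hj; simp [(hp j).ne']
    · have : (e.symm j : Fin n) ≠ e.symm j' := fun h => hj (e.symm.injective (Subtype.ext h))
      simp [hj, this]

lemma psd_conj {m n : ℕ} {Q : Matrix (Fin n) (Fin n) ℝ} (hQ : Q.PosSemidef)
    (B : Matrix (Fin m) (Fin n) ℝ) : (B * Q * Bᵀ).PosSemidef := by
  have := hQ.mul_mul_conjTranspose_same B
  rwa [conjTranspose_eq_transpose_of_trivial] at this

lemma simul {n : ℕ} {P Q : Matrix (Fin n) (Fin n) ℝ} (hP : P.PosSemidef) (hQ : Q.PosSemidef)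
    (hPQ : (Q - P).PosSemidef) :
    ∃ (k : ℕ) (L : Matrix (Fin n) (Fin k) ℝ) (L' : Matrix (Fin k) (Fin n) ℝ) (m : Fin k → ℝ),
      L * Lᵀ = Q ∧ L' * L = 1 ∧ L * diagonal m * Lᵀ = P ∧ (∀ i, 0 ≤ m i) ∧ (∀ i, m i ≤ 1) := by
  obtain ⟨k, L, L', h1, h2⟩ := factor hQ
  obtain ⟨k2, B, -, hB, -⟩ := factor hP
  set R := 1 - L * L' with hR
  have hRQ : R * Q = 0 := by
    rw [hR, ← h1, Matrix.sub_mul, Matrix.one_mul]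
    have : L * L' * (L * Lᵀ) = L * (L' * L) * Lᵀ := by simp only [Matrix.mul_assoc]
    rw [this, h2, Matrix.mul_one, sub_self]
  have h3 := psd_conj hPQ R
  have h4 : R * (Q - P) * Rᵀ = -((R * B) * (R * B)ᵀ) := by
    rw [Matrix.mul_sub, hRQ, zero_sub, ← hB, transpose_mul]
    simp only [Matrix.mul_assoc, Matrix.neg_mul]
  rw [h4] at h3
  have hRB : R * B = 0 := by
    ext i j
    have h5 := h3.diag_nonneg (i := i)
    rw [Matrix.neg_apply, mul_apply] at h5
    simp only [transpose_apply] at h5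
    have h6 : (R * B) i j * (R * B) i j ≤ ∑ j, (R * B) i j * (R * B) i j :=
      Finset.single_le_sum (f := fun j => (R * B) i j * (R * B) i j)
        (fun j _ => mul_self_nonneg _) (Finset.mem_univ j)
    have h7 : (R * B) i j * (R * B) i j = 0 := le_antisymm (by linarith) (mul_self_nonneg _)
    simpa using h7
  have hRP : R * P = 0 := by rw [← hB, ← Matrix.mul_assoc, hRB, Matrix.zero_mul]
  have hPi : L * L' * P = P := by
    rw [hR, Matrix.sub_mul, Matrix.one_mul, sub_eq_zero] at hRP
    exact hRP.symm
  have hPT : Pᵀ = P := by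
    have := hP.isHermitian.eq
    rwa [conjTranspose_eq_transpose_of_trivial] at this
  have hPi' : P * (L'ᵀ * Lᵀ) = P := by
    have := congrArg transpose hPi
    rwa [transpose_mul, transpose_mul, hPT] at this
  obtain ⟨O, m, hO1, hO2, hm0, hM⟩ := spec (psd_conj hP L')
  refine ⟨k, L * O, Oᵀ * L', m, ?_, ?_, ?_, hm0, ?_⟩
  · rw [transpose_mul]
    calc L * O * (Oᵀ * Lᵀ) = L * (O * Oᵀ) * Lᵀ := by simp only [Matrix.mul_assoc]
      _ = Q := by rw [hO2, Matrix.mul_one, h1]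
  · calc Oᵀ * L' * (L * O) = Oᵀ * (L' * L) * O := by simp only [Matrix.mul_assoc]
      _ = 1 := by rw [h2, Matrix.mul_one, hO1]
  · rw [transpose_mul]
    calc L * O * diagonal m * (Oᵀ * Lᵀ) = L * (O * diagonal m * Oᵀ) * Lᵀ := by
          simp only [Matrix.mul_assoc]
      _ = (L * L' * P) * (L'ᵀ * Lᵀ) := by rw [← hM]; simp only [Matrix.mul_assoc]
      _ = P := by rw [hPi, hPi']
  · intro i
    have h5 := psd_conj (psd_conj hPQ L') Oᵀ
    have h6 : L' * (Q - P) * L'ᵀ = 1 - O * diagonal m * Oᵀ := by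
      rw [← hM, Matrix.mul_sub, Matrix.sub_mul, ← h1]
      congr 1
      calc L' * (L * Lᵀ) * L'ᵀ = (L' * L) * (L' * L)ᵀ := by
            rw [transpose_mul]; simp only [Matrix.mul_assoc]
        _ = 1 := by rw [h2]; simp
    have h7 : Oᵀ * (1 - O * diagonal m * Oᵀ) * Oᵀᵀ = 1 - diagonal m := by
      rw [transpose_transpose, Matrix.mul_sub, Matrix.sub_mul, Matrix.mul_one, hO1]
      congr 1
      calc Oᵀ * (O * diagonal m * Oᵀ) * O = (Oᵀ * O) * diagonal m * (Oᵀ * O) := by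
            simp only [Matrix.mul_assoc]
        _ = _ := by rw [hO1]; simp
    rw [h6, h7] at h5
    have := h5.diag_nonneg (i := i)
    simpa using this

lemma gini_cont {n : ℕ} : Continuous (gini (n := n)) := by
  unfold gini; fun_prop

lemma gini_neg {n : ℕ} (x : Fin n → ℝ) : gini (-x) = gini x := by
  unfold gini
  congr 1
  refine Finset.sum_congr rfl fun i _ => Finset.sum_congr rfl fun j _ => ?_
  rw [← abs_neg]; congr 1; simp; ring

lemma gini_convex {n : ℕ} (x y : Fin n → ℝ) (a b : ℝ) (ha : 0 ≤ a) (hb : 0 ≤ b) :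
    gini (a • x + b • y) ≤ a * gini x + b * gini y := by
  have h : ∑ i, ∑ j, |(a • x + b • y) i - (a • x + b • y) j|
      ≤ a * ∑ i, ∑ j, |x i - x j| + b * ∑ i, ∑ j, |y i - y j| := by
    simp only [Finset.mul_sum, ← Finset.sum_add_distrib]
    refine Finset.sum_le_sum fun i _ => Finset.sum_le_sum fun j _ => ?_
    have e : (a • x + b • y) i - (a • x + b • y) j = a * (x i - x j) + b * (y i - y j) := by
      simp; ring
    rw [e]
    refine (abs_add_le _ _).trans ?_
    rw [abs_mul, abs_mul, abs_of_nonneg ha, abs_of_nonneg hb]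
  unfold gini
  have hc : (0:ℝ) ≤ 1 / (n:ℝ) ^ 2 := by positivity
  calc _ ≤ _ := mul_le_mul_of_nonneg_left h hc
    _ = _ := by ring

lemma law_cfm {Ω : Type*} [MeasurableSpace Ω] {P : Measure Ω} {n k : ℕ}
    {X : Ω → Fin n → ℝ} (hX : Measurable X) {μ : Fin n → ℝ} {S : Matrix (Fin n) (Fin n) ℝ}
    {φ : ℝ → ℂ}
    (hXell : ∀ t : Fin n → ℝ,
      charFn P X t = Complex.exp (((∑ i, t i * μ i : ℝ) : ℂ) * Complex.I) * φ (t ⬝ᵥ S *ᵥ t))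
    (B : Matrix (Fin k) (Fin n) ℝ) (t : Fin k → ℝ) :
    cfm (P.map fun ω => B *ᵥ X ω - B *ᵥ μ) t = φ (t ⬝ᵥ (B * S * Bᵀ) *ᵥ t) := by
  have hBm : Measurable fun x : Fin n → ℝ => B *ᵥ x := by
    refine Continuous.measurable ?_
    exact Continuous.matrix_mulVec continuous_const continuous_id
  have hm : Measurable fun ω => B *ᵥ X ω - B *ᵥ μ := (hBm.comp hX).sub_const _
  rw [cfm, integral_map hm.aemeasurable (expc_meas t).aestronglyMeasurable]
  have hd : ∀ x : Fin n → ℝ, t ⬝ᵥ B *ᵥ x = (t ᵥ* B) ⬝ᵥ x := fun x => dotProduct_mulVec t B x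
  have e : ∀ ω, Complex.exp (((∑ i, t i * (B *ᵥ X ω - B *ᵥ μ) i : ℝ) : ℂ) * Complex.I)
      = Complex.exp (-(((∑ i, (t ᵥ* B) i * μ i : ℝ) : ℂ) * Complex.I)) *
        Complex.exp (((∑ i, (t ᵥ* B) i * X ω i : ℝ) : ℂ) * Complex.I) := by
    intro ω
    rw [← Complex.exp_add]
    congr 1
    have : (∑ i, t i * (B *ᵥ X ω - B *ᵥ μ) i)
        = (∑ i, (t ᵥ* B) i * X ω i) - ∑ i, (t ᵥ* B) i * μ i := by
      have h1 : t ⬝ᵥ (B *ᵥ X ω - B *ᵥ μ) = (t ᵥ* B) ⬝ᵥ X ω - (t ᵥ* B) ⬝ᵥ μ := by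
        rw [dotProduct_sub, hd, hd]
      exact h1
    rw [this]; push_cast; ring
  simp only [e]
  rw [integral_const_mul]
  have h2 := hXell (t ᵥ* B)
  rw [charFn] at h2
  rw [h2, ← mul_assoc, ← Complex.exp_add, neg_add_cancel, Complex.exp_zero, one_mul]
  congr 1
  rw [← mulVec_mulVec, ← mulVec_mulVec, hd, mulVec_transpose]

theorem main_st {Ω : Type*} [MeasurableSpace Ω]
    (P : Measure Ω) [IsProbabilityMeasure P] {n : ℕ}
    (X Y : Ω → Fin n → ℝ) (hX : Measurable X) (hY : Measurable Y)
    (μ : Fin n → ℝ) (Sx Sy : Matrix (Fin n) (Fin n) ℝ)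
    (hSx : Sx.PosSemidef) (hSy : Sy.PosSemidef)
    (φ : ℝ → ℂ)
    (hXell : ∀ t : Fin n → ℝ,
      charFn P X t = Complex.exp (((∑ i, t i * μ i : ℝ) : ℂ) * Complex.I) * φ (t ⬝ᵥ Sx *ᵥ t))
    (hYell : ∀ t : Fin n → ℝ,
      charFn P Y t = Complex.exp (((∑ i, t i * μ i : ℝ) : ℂ) * Complex.I) * φ (t ⬝ᵥ Sy *ᵥ t))
    (A : Matrix (Fin n) (Fin n) ℝ)
    (hle : (A * Sy * Aᵀ - A * Sx * Aᵀ).PosSemidef) (t : ℝ) :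
    P {ω | t < gini (A *ᵥ X ω - A *ᵥ μ)} ≤ P {ω | t < gini (A *ᵥ Y ω - A *ᵥ μ)} := by
  obtain ⟨k, L, L', m, h1, h2, h3, hm0, hm1⟩ := simul (psd_conj hSx A) (psd_conj hSy A) hle
  have hcm : ∀ {a b : ℕ} (B : Matrix (Fin a) (Fin b) ℝ), Continuous fun x : Fin b → ℝ => B *ᵥ x :=
    fun B => Continuous.matrix_mulVec continuous_const continuous_id
  set ν : Measure (Fin k → ℝ) := P.map fun ω => (L' * A) *ᵥ Y ω - (L' * A) *ᵥ μ with hν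
  have hmZ : Measurable fun ω => (L' * A) *ᵥ Y ω - (L' * A) *ᵥ μ :=
    ((hcm (L' * A)).measurable.comp hY).sub_const _
  have hνp : IsProbabilityMeasure ν := Measure.isProbabilityMeasure_map hmZ.aemeasurable
  have hcf : ∀ s, cfm ν s = φ (qq s) := by
    intro s
    rw [hν, law_cfm hY hYell]
    have : L' * A * Sy * (L' * A)ᵀ = 1 := by
      calc L' * A * Sy * (L' * A)ᵀ = L' * (A * Sy * Aᵀ) * L'ᵀ := by
            rw [transpose_mul]; simp only [Matrix.mul_assoc]
        _ = (L' * L) * (L' * L)ᵀ := by rw [← h1, transpose_mul]; simp only [Matrix.mul_assoc]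
        _ = 1 := by rw [h2]; simp
    rw [this, one_mulVec, qq_dot]
  set d : Fin k → ℝ := fun i => √(m i) with hd
  have hpush : ∀ (c : Fin k → ℝ) (s : Fin n → ℝ), cfm (ν.map fun z => L *ᵥ (c * z)) s
      = φ (s ⬝ᵥ (L * diagonal (fun i => c i ^ 2) * Lᵀ) *ᵥ s) := by
    intro c s
    have hmm : Measurable fun z => L *ᵥ (c * z) :=
      ((hcm L).comp (by fun_prop : Continuous fun z : Fin k → ℝ => c * z)).measurable
    rw [cfm, integral_map hmm.aemeasurable (expc_meas s).aestronglyMeasurable]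
    have e : ∀ z : Fin k → ℝ, (∑ i, s i * (L *ᵥ (c * z)) i) = ∑ i, (c * (s ᵥ* L)) i * z i := by
      intro z
      have : s ⬝ᵥ L *ᵥ (c * z) = (s ᵥ* L) ⬝ᵥ (c * z) := dotProduct_mulVec _ _ _
      refine this.trans (Finset.sum_congr rfl fun i _ => ?_)
      simp only [Pi.mul_apply]; ring
    simp only [e]
    have := hcf (c * (s ᵥ* L))
    rw [cfm] at this
    rw [this]
    congr 1
    rw [← mulVec_mulVec, ← mulVec_mulVec, dotProduct_mulVec, mulVec_transpose, qq]
    refine Finset.sum_congr rfl fun i _ => ?_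
    rw [mulVec_diagonal]; simp only [Pi.mul_apply]; ring
  have hmX : Measurable fun ω => A *ᵥ X ω - A *ᵥ μ := ((hcm A).measurable.comp hX).sub_const _
  have hmY : Measurable fun ω => A *ᵥ Y ω - A *ᵥ μ := ((hcm A).measurable.comp hY).sub_const _
  have hmL : ∀ c : Fin k → ℝ, Measurable fun z => L *ᵥ (c * z) := fun c =>
    ((hcm L).comp (by fun_prop : Continuous fun z : Fin k → ℝ => c * z)).measurable
  have hpX : IsProbabilityMeasure (P.map fun ω => A *ᵥ X ω - A *ᵥ μ) :=
    Measure.isProbabilityMeasure_map hmX.aemeasurable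
  have hpY : IsProbabilityMeasure (P.map fun ω => A *ᵥ Y ω - A *ᵥ μ) :=
    Measure.isProbabilityMeasure_map hmY.aemeasurable
  have hpL : ∀ c : Fin k → ℝ, IsProbabilityMeasure (ν.map fun z => L *ᵥ (c * z)) := fun c =>
    Measure.isProbabilityMeasure_map (hmL c).aemeasurable
  have eX : (P.map fun ω => A *ᵥ X ω - A *ᵥ μ) = ν.map fun z => L *ᵥ (d * z) := by
    refine cfm_ext fun s => ?_
    have hdm : (fun i => d i ^ 2) = m := funext fun i => Real.sq_sqrt (hm0 i)
    rw [law_cfm hX hXell, hpush d, hdm, h3]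
  have eY : (P.map fun ω => A *ᵥ Y ω - A *ᵥ μ) = ν.map fun z => L *ᵥ (1 * z) := by
    refine cfm_ext fun s => ?_
    rw [law_cfm hY hYell, hpush 1]
    have : (diagonal fun i : Fin k => (1 : Fin k → ℝ) i ^ 2) = 1 := by simp
    rw [this, Matrix.mul_one, h1]
  have hgm : MeasurableSet {x : Fin n → ℝ | t < gini x} :=
    measurableSet_lt measurable_const gini_cont.measurable
  have pX : P {ω | t < gini (A *ᵥ X ω - A *ᵥ μ)} = ν {z | t < gini (L *ᵥ (d * z))} := by
    have := congrArg (fun M => M {x | t < gini x}) eX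
    simp only [Measure.map_apply hmX hgm, Measure.map_apply (hmL d) hgm] at this
    exact this
  have pY : P {ω | t < gini (A *ᵥ Y ω - A *ᵥ μ)} = ν {z | t < gini (L *ᵥ z)} := by
    have := congrArg (fun M => M {x | t < gini x}) eY
    simp only [Measure.map_apply hmY hgm, Measure.map_apply (hmL 1) hgm] at this
    simp only [one_mul] at this
    exact this
  rw [pX, pY]
  refine sph_strong (fun s t h => by rw [hcf, hcf, h]) (fun i => Real.sqrt_nonneg _)
    (fun i => Real.sqrt_le_one.2 (hm1 i)) (g := fun z => gini (L *ᵥ z)) (gini_cont.comp (hcm L))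
    (fun x => by rw [mulVec_neg, gini_neg]) (fun x y a b ha hb _ => ?_) t
  rw [mulVec_add, mulVec_smul, mulVec_smul]
  exact gini_convex _ _ a b ha hb

lemma gini_center {n : ℕ} (x : Fin n → ℝ) (c : ℝ) :
    gini (centeringMatrix n *ᵥ x - centeringMatrix n *ᵥ (fun _ => c)) = gini x := by
  have h : ∀ (y : Fin n → ℝ) i, (centeringMatrix n *ᵥ y) i = y i - (n:ℝ)⁻¹ * ∑ j, y j := by
    intro y i
    rw [centeringMatrix, sub_mulVec, one_mulVec, smul_mulVec]
    simp [mulVec, dotProduct]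
  unfold gini
  congr 1
  refine Finset.sum_congr rfl fun i _ => Finset.sum_congr rfl fun j _ => ?_
  simp only [Pi.sub_apply, h]
  congr 1; ring

/-- If `X ∼ ELLₙ(μ, Σx, φ)`, `Y ∼ ELLₙ(μ, Σy, φ)` and
`A Σx Aᵀ ⪯ A Σy Aᵀ` for the centering matrix `A`, then
`G_n(AX − Aμ) ≤_st G_n(AY − Aμ)`; in particular, if `μ = c·1ₙ` then
`G_n(X) ≤_st G_n(Y)`. -/
theorem gini_st_order_elliptical_centering {Ω : Type*} [MeasurableSpace Ω]
    (P : Measure Ω) [IsProbabilityMeasure P] {n : ℕ}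
    (X Y : Ω → Fin n → ℝ) (hX : Measurable X) (hY : Measurable Y)
    (μ : Fin n → ℝ) (Sx Sy : Matrix (Fin n) (Fin n) ℝ)
    (hSx : Sx.PosSemidef) (hSy : Sy.PosSemidef)
    (φ : ℝ → ℂ)
    (hXell : ∀ t : Fin n → ℝ,
      charFn P X t = Complex.exp (((∑ i, t i * μ i : ℝ) : ℂ) * Complex.I) * φ (t ⬝ᵥ Sx *ᵥ t))
    (hYell : ∀ t : Fin n → ℝ,
      charFn P Y t = Complex.exp (((∑ i, t i * μ i : ℝ) : ℂ) * Complex.I) * φ (t ⬝ᵥ Sy *ᵥ t))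
    (hle : (centeringMatrix n * Sy * (centeringMatrix n)ᵀ
            - centeringMatrix n * Sx * (centeringMatrix n)ᵀ).PosSemidef) :
    (∀ t : ℝ, P {ω | t < gini (centeringMatrix n *ᵥ X ω - centeringMatrix n *ᵥ μ)}
        ≤ P {ω | t < gini (centeringMatrix n *ᵥ Y ω - centeringMatrix n *ᵥ μ)}) ∧
    (∀ c : ℝ, μ = (fun _ => c) →
      ∀ t : ℝ, P {ω | t < gini (X ω)} ≤ P {ω | t < gini (Y ω)}) := by
  have h1 := main_st P X Y hX hY μ Sx Sy hSx hSy φ hXell hYell (centeringMatrix n) hle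
  refine ⟨h1, fun c hc t => ?_⟩
  have h2 := h1 t
  subst hc
  simpa only [gini_center] using h2
end

section
/- Let X_1 and X_2 be independent standard normal random variables (each N(0,1)). Then lim_{t→∞} (1/t²)·log P(2|X_1 − X_2| > t) = −1/16. (Here 2|X_1 − X_2| equals the unnormalized Gini sum S_2(X) = ∑_{i=1}^2 (4i − 6) X_{(i)} of the bivariate standard normal vector X = (X_1, X_2).) -/
open MeasureTheory ProbabilityTheory Filter

lemma gini_tail_upper (s : ℝ) (hs : 0 ≤ s) :
    (gaussianReal 0 2).real {x | s ≤ x} ≤ Real.exp (-(s ^ 2) / 4) := by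
  have h := measure_ge_le_exp_mul_mgf (μ := gaussianReal 0 2) (X := id) (t := s / 2) s
    (by positivity) (by simpa using integrable_exp_mul_gaussianReal (μ := 0) (v := 2) (s / 2))
  rw [mgf_id_gaussianReal, ← Real.exp_add] at h
  refine h.trans (Real.exp_le_exp.2 (le_of_eq ?_))
  push_cast
  ring

lemma gini_tail_upper_neg (s : ℝ) (hs : 0 ≤ s) :
    (gaussianReal 0 2).real {x | x ≤ -s} ≤ Real.exp (-(s ^ 2) / 4) := by
  have h := measure_le_le_exp_mul_mgf (μ := gaussianReal 0 2) (X := id) (t := -(s / 2)) (-s)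
    (by linarith) (by simpa using integrable_exp_mul_gaussianReal (μ := 0) (v := 2) (-(s / 2)))
  rw [mgf_id_gaussianReal, ← Real.exp_add] at h
  refine h.trans (Real.exp_le_exp.2 (le_of_eq ?_))
  push_cast
  ring

lemma gini_tail_lower (s : ℝ) (hs : 0 ≤ s) :
    (Real.sqrt (2 * Real.pi * 2))⁻¹ * Real.exp (-((s + 1) ^ 2) / 4)
      ≤ (gaussianReal 0 2).real (Set.Ioc s (s + 1)) := by
  rw [measureReal_def, gaussianReal_apply_eq_integral 0 (by norm_num) (Set.Ioc s (s + 1)),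
    ENNReal.toReal_ofReal (integral_nonneg fun x => gaussianPDFReal_nonneg _ _ _)]
  have h := setIntegral_mono_on (μ := volume) (s := Set.Ioc s (s + 1))
    (f := fun _ => (Real.sqrt (2 * Real.pi * 2))⁻¹ * Real.exp (-((s + 1) ^ 2) / 4))
    (g := gaussianPDFReal 0 2) (integrableOn_const (by simp)) (integrable_gaussianPDFReal 0 2).integrableOn
    measurableSet_Ioc (by
      intro x hx
      rw [gaussianPDFReal_def]
      push_cast
      refine mul_le_mul_of_nonneg_left (Real.exp_le_exp.2 ?_) (by positivity)
      have := hx.1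
      have := hx.2
      nlinarith)
  simpa using h

/-- if `X₁, X₂` are independent standard normal random variables, then
`lim_{t→∞} (1/t²)·log P(2|X₁ − X₂| > t) = −1/16`.
(Here `2|X₁ − X₂|` is the unnormalized Gini sum `S₂(X)` of `X = (X₁, X₂)`.) -/
theorem gini_large_deviation_bivariate_standard_normal {Ω : Type*} [MeasurableSpace Ω]
    (P : Measure Ω) [IsProbabilityMeasure P]
    (X₁ X₂ : Ω → ℝ) (hX₁ : Measurable X₁) (hX₂ : Measurable X₂)
    (h₁ : Measure.map X₁ P = gaussianReal 0 1)
    (h₂ : Measure.map X₂ P = gaussianReal 0 1)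
    (hind : IndepFun X₁ X₂ P) :
    Tendsto (fun t : ℝ => Real.log (P {ω | t < 2 * |X₁ ω - X₂ ω|}).toReal / t ^ 2)
      atTop (nhds (-1 / 16)) := by
  have hneg : Measure.map (fun ω => - X₂ ω) P = gaussianReal 0 1 := by
    have : (fun ω => - X₂ ω) = (fun x : ℝ => -x) ∘ X₂ := rfl
    rw [this, ← Measure.map_map measurable_neg hX₂, h₂, gaussianReal_map_neg]
    simp
  have hind' : IndepFun X₁ (fun ω => - X₂ ω) P := hind.comp measurable_id measurable_neg
  have hD : Measure.map (fun ω => X₁ ω - X₂ ω) P = gaussianReal 0 2 := by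
    have h := gaussianReal_add_gaussianReal_of_indepFun hind' h₁ hneg
    have e : (fun ω => X₁ ω - X₂ ω) = X₁ + (fun ω => - X₂ ω) := by
      ext ω; simp [sub_eq_add_neg]
    rw [e, h]
    norm_num
  have hmeas : ∀ t : ℝ, MeasurableSet {x : ℝ | t < 2 * |x|} := fun t =>
    measurableSet_lt measurable_const (by fun_prop)
  have hQ : ∀ t : ℝ, (P {ω | t < 2 * |X₁ ω - X₂ ω|}).toReal
      = (gaussianReal 0 2).real {x : ℝ | t < 2 * |x|} := by
    intro t
    rw [← hD, measureReal_def, Measure.map_apply (by fun_prop) (hmeas t)]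
    rfl
  simp_rw [hQ]
  set c : ℝ := (Real.sqrt (2 * Real.pi * 2))⁻¹ with hc
  have hcpos : 0 < c := by positivity
  have hlow : ∀ t : ℝ, 0 ≤ t → c * Real.exp (-((t / 2 + 1) ^ 2) / 4) ≤
      (gaussianReal 0 2).real {x : ℝ | t < 2 * |x|} := by
    intro t ht
    refine (gini_tail_lower (t / 2) (by positivity)).trans (measureReal_mono ?_)
    intro x hx
    have h1 := hx.1
    have h2 := le_abs_self x
    simp only [Set.mem_ofPred_eq]
    linarith
  have hup : ∀ t : ℝ, 0 ≤ t → (gaussianReal 0 2).real {x : ℝ | t < 2 * |x|} ≤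
      2 * Real.exp (-((t / 2) ^ 2) / 4) := by
    intro t ht
    have hsub : {x : ℝ | t < 2 * |x|} ⊆ {x | t / 2 ≤ x} ∪ {x | x ≤ -(t / 2)} := by
      intro x hx
      simp only [Set.mem_ofPred_eq] at hx
      rcases abs_cases x with ⟨h, _⟩ | ⟨h, _⟩
      · left; simp only [Set.mem_ofPred_eq]; linarith
      · right; simp only [Set.mem_ofPred_eq]; linarith
    have := (measureReal_mono (μ := gaussianReal 0 2) hsub).trans (measureReal_union_le _ _)
    linarith [gini_tail_upper (t / 2) (by positivity), gini_tail_upper_neg (t / 2) (by positivity)]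
  have hinv : Tendsto (fun t : ℝ => t⁻¹) atTop (nhds 0) := tendsto_inv_atTop_zero
  have hL : Tendsto (fun t : ℝ => Real.log c * (t⁻¹) ^ 2 - (1 / 2 + t⁻¹) ^ 2 / 4)
      atTop (nhds (-1 / 16)) := by
    have := ((hinv.pow 2).const_mul (Real.log c)).sub (((hinv.const_add (1 / 2)).pow 2).div_const 4)
    convert this using 2
    norm_num
  have hU : Tendsto (fun t : ℝ => Real.log 2 * (t⁻¹) ^ 2 - 1 / 16) atTop (nhds (-1 / 16)) := by
    have := ((hinv.pow 2).const_mul (Real.log 2)).sub_const (1 / 16)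
    convert this using 2
    norm_num
  refine tendsto_of_tendsto_of_tendsto_of_le_of_le' hL hU ?_ ?_
  · filter_upwards [eventually_gt_atTop 0] with t ht
    have h := Real.log_le_log (by positivity) (hlow t ht.le)
    rw [Real.log_mul hcpos.ne' (Real.exp_pos _).ne', Real.log_exp] at h
    rw [le_div_iff₀ (by positivity)]
    refine le_trans (le_of_eq ?_) h
    field_simp
    ring
  · filter_upwards [eventually_gt_atTop 0] with t ht
    have hp : 0 < (gaussianReal 0 2).real {x : ℝ | t < 2 * |x|} :=
      lt_of_lt_of_le (by positivity) (hlow t ht.le)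
    have h := Real.log_le_log hp (hup t ht.le)
    rw [Real.log_mul two_ne_zero (Real.exp_pos _).ne', Real.log_exp] at h
    rw [div_le_iff₀ (by positivity)]
    refine h.trans (le_of_eq ?_)
    field_simp
    ring
end
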